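/- Representation Formula: Let Ω ⊆ M be a p-symmetric slice domain and f : Ω → 𝔸 a left generalized partial-slice monogenic function. Then for every ω, η ∈ 𝕊 and every point x_p + rω ∈ Ω: f(x_p + rω) = (1/2)(f(x_p + rη) + f(x_p − rη)) + (1/2) ω (η (f(x_p − rη) − f(x_p + rη))). Moreover the functions F₁(x_p, r) = (1/2)(f(x_p + rη) + f(x_p − rη)) and F₂(x_p, r) = (1/2) η (f(x_p − rη) − f(x_p + rη)) do not depend on the choice of η ∈ 𝕊. -/

import Mathlib

open scoped BigOperators
open Filter Topology

namespace GPSM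

variable (A : Type*) [NormedAddCommGroup A] [NormedSpace ℝ A] [Mul A] [One A]

/-- `A` is a real alternative algebra with unit `1`, of finite dimension `d > 1`,
equipped with an anti-involution `conj` (a real-linear map with `(a^c)^c = a`,
`(ab)^c = b^c a^c`, fixing the reals).  The associator is alternating (left/right
alternative laws). -/
structure IsAltStarAlg (conj : A → A) : Prop where
  finDim : FiniteDimensional ℝ A
  one_lt_finrank : 1 < Module.finrank ℝ A
  mul_add' : ∀ a b c : A, a * (b + c) = a * b + a * c
  add_mul' : ∀ a b c : A, (a + b) * c = a * c + b * c
  smul_mul' : ∀ (r : ℝ) (a b : A), (r • a) * b = r • (a * b)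
  mul_smul' : ∀ (r : ℝ) (a b : A), a * (r • b) = r • (a * b)
  one_mul' : ∀ a : A, 1 * a = a
  mul_one' : ∀ a : A, a * 1 = a
  alt_left : ∀ a b : A, a * (a * b) = a * a * b
  alt_right : ∀ a b : A, a * b * b = a * (b * b)
  conj_add : ∀ a b : A, conj (a + b) = conj a + conj b
  conj_smul : ∀ (r : ℝ) (a : A), conj (r • a) = r • conj a
  conj_conj : ∀ a : A, conj (conj a) = a
  conj_mul : ∀ a b : A, conj (a * b) = conj b * conj a
  conj_one : conj 1 = 1

/-- `v 0, v 1, …, v m` is a hypercomplex basis of the hypercomplex subspace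
`M = span(v 0, …, v m)` of `A`: `v 0 = 1`, `t(v s) = 0`, `n(v s) = 1`, the `v s`
anticommute for distinct `s, t ∈ {1,…,m}`, they are linearly independent, and
`M` is contained in the quadratic cone `Q_A`. -/
structure IsHypBasis (conj : A → A) (v : ℕ → A) (m : ℕ) : Prop where
  v_zero : v 0 = 1
  trace_zero : ∀ s, 1 ≤ s → s ≤ m → v s + conj (v s) = 0
  norm_one : ∀ s, 1 ≤ s → s ≤ m → v s * conj (v s) = 1
  anticomm : ∀ s t, 1 ≤ s → s ≤ m → 1 ≤ t → t ≤ m → s ≠ t → v s * v t = -(v t * v s)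
  indep : LinearIndependent ℝ (fun i : Fin (m + 1) => v i)
  mem_cone : ∀ x ∈ Submodule.span ℝ (Set.range fun i : Fin (m + 1) => v (i : ℕ)),
      ∃ tr nr : ℝ, x + conj x = tr • (1 : A) ∧ x * conj x = nr • (1 : A) ∧
        ((∃ r : ℝ, x = r • (1 : A)) ∨ tr ^ 2 < 4 * nr)

variable {A}

/-- Identification of `ℝ^{m+1}` with the hypercomplex subspace `M`:
`(x_0,…,x_m) ↦ Σ x_s • v s`. -/
def emb (v : ℕ → A) (m : ℕ) (x : Fin (m + 1) → ℝ) : A :=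
  ∑ s : Fin (m + 1), x s • v (s : ℕ)

/-- First `p+1` coordinates of a point of `M ≅ ℝ^{m+1}`, i.e. the `x_p`-part. -/
def projP (m p : ℕ) (x : Fin (m + 1) → ℝ) : Fin (p + 1) → ℝ := fun s =>
  if h : (s : ℕ) < m + 1 then x ⟨(s : ℕ), h⟩ else 0

/-- Inclusion `ℝ^{p+1} ⊆ ℝ^{m+1}` (remaining coordinates `0`). -/
def injP (m p : ℕ) (y : Fin (p + 1) → ℝ) : Fin (m + 1) → ℝ := fun s =>
  if h : (s : ℕ) < p + 1 then y ⟨(s : ℕ), h⟩ else 0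

/-- The coordinates of `x_q` (last `q = m - p` coordinates of `x`). -/
def xqpart (m p : ℕ) (x : Fin (m + 1) → ℝ) : Fin (m + 1) → ℝ := fun s =>
  if (s : ℕ) ≤ p then 0 else x s

/-- The coordinates of `x_p` inside `ℝ^{m+1}`. -/
def xppart (m p : ℕ) (x : Fin (m + 1) → ℝ) : Fin (m + 1) → ℝ := fun s =>
  if (s : ℕ) ≤ p then x s else 0

/-- `r = |x_q|`. -/
noncomputable def rad (m p : ℕ) (x : Fin (m + 1) → ℝ) : ℝ :=
  Real.sqrt (∑ s : Fin (m + 1), (xqpart m p x s) ^ 2)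

/-- `ω = x_q / |x_q|` (coordinates), `0` when `x_q = 0`. -/
noncomputable def normq (m p : ℕ) (x : Fin (m + 1) → ℝ) : Fin (m + 1) → ℝ :=
  (rad m p x)⁻¹ • xqpart m p x

/-- The reflection `x = x_p + x_q ↦ x_⋄ = x_p - x_q`. -/
def reflP (m p : ℕ) (x : Fin (m + 1) → ℝ) : Fin (m + 1) → ℝ := fun s =>
  if (s : ℕ) ≤ p then x s else -x s

/-- The sphere `𝕊 = {x_q ∈ span(v_{p+1},…,v_m) : x_q² = -1}`, in coordinates. -/
def Sph (v : ℕ → A) (m p : ℕ) : Set (Fin (m + 1) → ℝ) :=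
  {w | (∀ s : Fin (m + 1), (s : ℕ) ≤ p → w s = 0) ∧ emb v m w * emb v m w = -1}

/-- The point `x_p + r ω` of `M ≅ ℝ^{m+1}`. -/
def pt (m p : ℕ) (w : Fin (m + 1) → ℝ) (y : Fin (p + 1) → ℝ) (r : ℝ) :
    Fin (m + 1) → ℝ :=
  injP m p y + r • w

/-- The slice `Ω_ω ⊆ ℝ^{p+2}` of `Ω` at `ω`. -/
def sliceSet (m p : ℕ) (Ω : Set (Fin (m + 1) → ℝ)) (w : Fin (m + 1) → ℝ) :
    Set ((Fin (p + 1) → ℝ) × ℝ) := {z | pt m p w z.1 z.2 ∈ Ω}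

/-- The restriction `f_ω` of `f` to the slice at `ω`, as a function on `ℝ^{p+2}`. -/
def sliceFun (m p : ℕ) (f : (Fin (m + 1) → ℝ) → A) (w : Fin (m + 1) → ℝ) :
    (Fin (p + 1) → ℝ) × ℝ → A := fun z => f (pt m p w z.1 z.2)

/-- Partial derivative `∂_{x_s}` of a function on `ℝ^{m+1}`. -/
noncomputable def pdF (m : ℕ) (s : Fin (m + 1)) (f : (Fin (m + 1) → ℝ) → A)
    (x : Fin (m + 1) → ℝ) : A := fderiv ℝ f x (Pi.single s 1)

/-- Partial derivative `∂_{x_s}` of a function on `ℝ^{p+1}`. -/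
noncomputable def pdP (p : ℕ) (s : Fin (p + 1)) (g : (Fin (p + 1) → ℝ) → A)
    (y : Fin (p + 1) → ℝ) : A := fderiv ℝ g y (Pi.single s 1)

/-- Partial derivative `∂_{x_s}` of a function on `ℝ^{p+2} = ℝ^{p+1} × ℝ`. -/
noncomputable def pdSx (p : ℕ) (s : Fin (p + 1)) (G : (Fin (p + 1) → ℝ) × ℝ → A)
    (z : (Fin (p + 1) → ℝ) × ℝ) : A := fderiv ℝ G z (Pi.single s 1, 0)

/-- Partial derivative `∂_r` of a function on `ℝ^{p+2} = ℝ^{p+1} × ℝ`. -/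
noncomputable def pdSr (p : ℕ) (G : (Fin (p + 1) → ℝ) × ℝ → A)
    (z : (Fin (p + 1) → ℝ) × ℝ) : A := fderiv ℝ G z (0, 1)

/-- Second partial derivative `∂_r²`. -/
noncomputable def pdSr2 (p : ℕ) (G : (Fin (p + 1) → ℝ) × ℝ → A)
    (z : (Fin (p + 1) → ℝ) × ℝ) : A := pdSr p (pdSr p G) z

/-- The operator `Σ_{lo ≤ s ≤ hi} v_s ∂_{x_s}` on functions on `ℝ^{m+1}`.
`Dop v m 0 p` is `D_{x_p}`, `Dop v m (p+1) m` is `D_{x_q}`, `Dop v m 0 m` is `D_x`. -/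
noncomputable def Dop (v : ℕ → A) (m lo hi : ℕ) (f : (Fin (m + 1) → ℝ) → A)
    (x : Fin (m + 1) → ℝ) : A :=
  ∑ s : Fin (m + 1), if lo ≤ (s : ℕ) ∧ (s : ℕ) ≤ hi then v (s : ℕ) * pdF m s f x else 0

/-- The conjugate operator `∂_{x_0} - Σ_{1 ≤ s ≤ hi} v_s ∂_{x_s}` on functions on
`ℝ^{m+1}`; `Dbarop v m p` is `D̄_{x_p}`, `Dbarop v m m` is `D̄_x`. -/
noncomputable def Dbarop (v : ℕ → A) (m hi : ℕ) (f : (Fin (m + 1) → ℝ) → A)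
    (x : Fin (m + 1) → ℝ) : A :=
  pdF m 0 f x -
    ∑ s : Fin (m + 1), if 1 ≤ (s : ℕ) ∧ (s : ℕ) ≤ hi then v (s : ℕ) * pdF m s f x else 0

/-- The operator `D_{x_p} = Σ_{s=0}^p v_s ∂_{x_s}` on functions on `ℝ^{p+1}`. -/
noncomputable def DopP (v : ℕ → A) (p : ℕ) (g : (Fin (p + 1) → ℝ) → A)
    (y : Fin (p + 1) → ℝ) : A :=
  ∑ s : Fin (p + 1), v (s : ℕ) * pdP p s g y

/-- The operator `D̄_{x_p} = ∂_{x_0} - Σ_{s=1}^p v_s ∂_{x_s}` on functions on `ℝ^{p+1}`. -/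
noncomputable def DbaropP (v : ℕ → A) (p : ℕ) (g : (Fin (p + 1) → ℝ) → A)
    (y : Fin (p + 1) → ℝ) : A :=
  pdP p 0 g y - ∑ s : Fin (p + 1), if 1 ≤ (s : ℕ) then v (s : ℕ) * pdP p s g y else 0

/-- The operator `D_{x_p}` on functions on `ℝ^{p+2} = ℝ^{p+1} × ℝ`. -/
noncomputable def DopSx (v : ℕ → A) (p : ℕ) (G : (Fin (p + 1) → ℝ) × ℝ → A)
    (z : (Fin (p + 1) → ℝ) × ℝ) : A :=
  ∑ s : Fin (p + 1), v (s : ℕ) * pdSx p s G z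

/-- The operator `D̄_{x_p}` on functions on `ℝ^{p+2} = ℝ^{p+1} × ℝ`. -/
noncomputable def DbaropSx (v : ℕ → A) (p : ℕ) (G : (Fin (p + 1) → ℝ) × ℝ → A)
    (z : (Fin (p + 1) → ℝ) × ℝ) : A :=
  pdSx p 0 G z - ∑ s : Fin (p + 1), if 1 ≤ (s : ℕ) then v (s : ℕ) * pdSx p s G z else 0

/-- The Laplacian `Δ_x` on functions on `ℝ^{m+1}`. -/
noncomputable def lapF (m : ℕ) (f : (Fin (m + 1) → ℝ) → A)
    (x : Fin (m + 1) → ℝ) : A :=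
  ∑ s : Fin (m + 1), pdF m s (pdF m s f) x

/-- The Laplacian `Δ_{x_p}` on functions on `ℝ^{p+1}`. -/
noncomputable def lapP (p : ℕ) (g : (Fin (p + 1) → ℝ) → A)
    (y : Fin (p + 1) → ℝ) : A :=
  ∑ s : Fin (p + 1), pdP p s (pdP p s g) y

/-- Iterated Laplacian `Δ_x^k`. -/
noncomputable def lapIterF (m k : ℕ) (f : (Fin (m + 1) → ℝ) → A) :
    (Fin (m + 1) → ℝ) → A :=
  (fun g => lapF m g)^[k] f

/-- Iterated Laplacian `Δ_{x_p}^k`. -/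
noncomputable def lapIterP (p k : ℕ) (g : (Fin (p + 1) → ℝ) → A) :
    (Fin (p + 1) → ℝ) → A :=
  (fun h => lapP p h)^[k] g

/-- The Laplacian `Δ_{x'} = Δ_{x_p} + ∂_r²` on functions on `ℝ^{p+2}`. -/
noncomputable def lapSx (p : ℕ) (G : (Fin (p + 1) → ℝ) × ℝ → A)
    (z : (Fin (p + 1) → ℝ) × ℝ) : A :=
  (∑ s : Fin (p + 1), pdSx p s (pdSx p s G) z) + pdSr2 p G z

/-- The slice Cauchy-Riemann operator `D_ω = D_{x_p} + ω ∂_r` applied to a function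
on `ℝ^{p+2}`, where `ω` is given in coordinates by `w`. -/
noncomputable def DomCR (v : ℕ → A) (m p : ℕ) (w : Fin (m + 1) → ℝ)
    (G : (Fin (p + 1) → ℝ) × ℝ → A) (z : (Fin (p + 1) → ℝ) × ℝ) : A :=
  DopSx v p G z + emb v m w * pdSr p G z

/-- `f` is left generalized partial-slice monogenic (of type `(p, m-p)`) on `Ω`. -/
def GSM (v : ℕ → A) (m p : ℕ) (f : (Fin (m + 1) → ℝ) → A)
    (Ω : Set (Fin (m + 1) → ℝ)) : Prop :=
  ∀ w ∈ Sph v m p, ContDiffOn ℝ 1 (sliceFun m p f w) (sliceSet m p Ω w) ∧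
    ∀ z ∈ sliceSet m p Ω w, DomCR v m p w (sliceFun m p f w) z = 0

/-- `Ω` is partially symmetric with respect to `ℝ^{p+1}`. -/
def PSym (v : ℕ → A) (m p : ℕ) (Ω : Set (Fin (m + 1) → ℝ)) : Prop :=
  ∀ x ∈ Ω, ∀ w ∈ Sph v m p, xppart m p x + rad m p x • w ∈ Ω

/-- `Ω` is a slice domain: a domain meeting `ℝ^{p+1}` all of whose slices are
domains in `ℝ^{p+2}`. -/
def SliceDomain (v : ℕ → A) (m p : ℕ) (Ω : Set (Fin (m + 1) → ℝ)) : Prop :=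
  IsOpen Ω ∧ IsConnected Ω ∧ (∃ x ∈ Ω, xqpart m p x = 0) ∧
    ∀ w ∈ Sph v m p, IsConnected (sliceSet m p Ω w)

/-- The reflection `(x_p, r) ↦ (x_p, -r)` of `ℝ^{p+2}`. -/
def reflD (p : ℕ) (z : (Fin (p + 1) → ℝ) × ℝ) : (Fin (p + 1) → ℝ) × ℝ := (z.1, -z.2)

/-- The p-symmetric completion `Ω_D ⊆ M` of `D ⊆ ℝ^{p+2}`. -/
def OmegaD (v : ℕ → A) (m p : ℕ) (D : Set ((Fin (p + 1) → ℝ) × ℝ)) :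
    Set (Fin (m + 1) → ℝ) :=
  {x | ∃ w ∈ Sph v m p, ∃ z ∈ D, x = pt m p w z.1 z.2}

/-- `(F₁, F₂)` satisfies the even-odd (stem function) conditions on `D`. -/
def IsStem (p : ℕ) (D : Set ((Fin (p + 1) → ℝ) × ℝ))
    (F₁ F₂ : (Fin (p + 1) → ℝ) × ℝ → A) : Prop :=
  ∀ z ∈ D, F₁ (reflD p z) = F₁ z ∧ F₂ (reflD p z) = -F₂ z

/-- `f` is the generalized partial-slice function induced by the stem `(F₁, F₂)`:
`f(x_p + rω) = F₁(x_p, r) + ω F₂(x_p, r)`. -/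
def Induced (v : ℕ → A) (m p : ℕ) (D : Set ((Fin (p + 1) → ℝ) × ℝ))
    (F₁ F₂ : (Fin (p + 1) → ℝ) × ℝ → A) (f : (Fin (m + 1) → ℝ) → A) : Prop :=
  ∀ w ∈ Sph v m p, ∀ z ∈ D, f (pt m p w z.1 z.2) = F₁ z + emb v m w * F₂ z

/-- The generalized Cauchy-Riemann system for the stem `(F₁, F₂)` on `D`. -/
def StemCR (v : ℕ → A) (p : ℕ) (D : Set ((Fin (p + 1) → ℝ) × ℝ))
    (F₁ F₂ : (Fin (p + 1) → ℝ) × ℝ → A) : Prop :=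
  ∀ z ∈ D, DopSx v p F₁ z - pdSr p F₂ z = 0 ∧ DbaropSx v p F₂ z + pdSr p F₁ z = 0

/-- `f` is generalized partial-slice regular on `Ω_D`. -/
def MemGSR (v : ℕ → A) (m p : ℕ) (D : Set ((Fin (p + 1) → ℝ) × ℝ))
    (f : (Fin (m + 1) → ℝ) → A) : Prop :=
  ∃ F₁ F₂ : (Fin (p + 1) → ℝ) × ℝ → A, IsStem p D F₁ F₂ ∧
    ContDiffOn ℝ 1 F₁ D ∧ ContDiffOn ℝ 1 F₂ D ∧
    Induced v m p D F₁ F₂ f ∧ StemCR v p D F₁ F₂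

/-- `f` is a generalized partial-slice function on `Ω`. -/
def MemGS (v : ℕ → A) (m p : ℕ) (Ω : Set (Fin (m + 1) → ℝ))
    (f : (Fin (m + 1) → ℝ) → A) : Prop :=
  ∃ F₁ F₂ : (Fin (p + 1) → ℝ) × ℝ → A,
    (∀ z : (Fin (p + 1) → ℝ) × ℝ, F₁ (reflD p z) = F₁ z ∧ F₂ (reflD p z) = -F₂ z) ∧
    ∀ x ∈ Ω, f x = F₁ (projP m p x, rad m p x) +
      emb v m (normq m p x) * F₂ (projP m p x, rad m p x)

/-- Non-associative power: `a^n` with products taken from the right. -/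
def apow (a : A) (n : ℕ) : A := (fun b => a * b)^[n] 1

/-- Partial even part `PE[f](x) = (f(x) + f(x_⋄))/2`. -/
noncomputable def PE (m p : ℕ) (f : (Fin (m + 1) → ℝ) → A)
    (x : Fin (m + 1) → ℝ) : A := (2 : ℝ)⁻¹ • (f x + f (reflP m p x))

/-- Partial odd part `PO[f](x) = (f(x) - f(x_⋄))/2`. -/
noncomputable def PO (m p : ℕ) (f : (Fin (m + 1) → ℝ) → A)
    (x : Fin (m + 1) → ℝ) : A := (2 : ℝ)⁻¹ • (f x - f (reflP m p x))

/-- `Ω₀* = {x_p + x_q : x_p ∈ Ω₀, x_q ∈ ℝ^q}`. -/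
def Omega0star (m p : ℕ) (Ω₀ : Set (Fin (p + 1) → ℝ)) : Set (Fin (m + 1) → ℝ) :=
  {x | projP m p x ∈ Ω₀}

/-- The spherical derivative `f'_s(x) = (1/2) x_q⁻¹ (f(x) - f(x_⋄))`
(using `x_q⁻¹ = -x_q/|x_q|²`). -/
noncomputable def sder (v : ℕ → A) (m p : ℕ) (f : (Fin (m + 1) → ℝ) → A)
    (x : Fin (m + 1) → ℝ) : A :=
  -(((2 : ℝ) * rad m p x ^ 2)⁻¹) • (emb v m (xqpart m p x) * (f x - f (reflP m p x)))

/-- The spherical Dirac operator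
`Γ f = -(1/2) Σ_{p+1 ≤ i,j ≤ m} v_i (v_j (L_{ij} f))`. -/
noncomputable def sphericalGamma (v : ℕ → A) (m p : ℕ) (f : (Fin (m + 1) → ℝ) → A)
    (x : Fin (m + 1) → ℝ) : A :=
  -((2 : ℝ)⁻¹) • ∑ i : Fin (m + 1), ∑ j : Fin (m + 1),
    if p < (i : ℕ) ∧ p < (j : ℕ) then
      v (i : ℕ) * (v (j : ℕ) * (x i • pdF m j f x - x j • pdF m i f x)) else 0

/-- The slice Cauchy-Riemann operator `D_ω` applied to (the slice restriction of) a
function `f` on `M`, at the point `x` (with `ω = x_q/|x_q|`). -/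
noncomputable def DomCRat (v : ℕ → A) (m p : ℕ) (f : (Fin (m + 1) → ℝ) → A)
    (x : Fin (m + 1) → ℝ) : A :=
  DomCR v m p (normq m p x) (sliceFun m p f (normq m p x)) (projP m p x, rad m p x)

/-- `f` is left monogenic on `Ω`: `f ∈ C¹` and `D_x f = 0`. -/
def Monogenic (v : ℕ → A) (m : ℕ) (f : (Fin (m + 1) → ℝ) → A)
    (Ω : Set (Fin (m + 1) → ℝ)) : Prop :=
  ContDiffOn ℝ 1 f Ω ∧ ∀ x ∈ Ω, Dop v m 0 m f x = 0

/-- `f` is harmonic on `Ω`: `f ∈ C²` and `Δ_x f = 0`. -/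
def Harmonic (m : ℕ) (f : (Fin (m + 1) → ℝ) → A)
    (Ω : Set (Fin (m + 1) → ℝ)) : Prop :=
  ContDiffOn ℝ 2 f Ω ∧ ∀ x ∈ Ω, lapF m f x = 0

/-- A family of functions converges normally (locally a summable uniform bound). -/
def NormallyConvOn {E F : Type*} [TopologicalSpace E] [NormedAddCommGroup F]
    (u : ℕ → E → F) (s : Set E) : Prop :=
  ∀ x ∈ s, ∃ U ∈ nhds x, ∃ c : ℕ → ℝ, Summable c ∧ ∀ k : ℕ, ∀ y ∈ U, ‖u k y‖ ≤ c k

/-- The generalized partial-slice CK-extension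
`CK[f₀](x) = Σ_k (r^{2k}/(2k)!)(-Δ_{x_p})^k f₀(x_p)
  + ω Σ_k (r^{2k+1}/(2k+1)!)(-Δ_{x_p})^k (D_{x_p} f₀)(x_p)`. -/
noncomputable def CKe (v : ℕ → A) (m p : ℕ) (f₀ : (Fin (p + 1) → ℝ) → A)
    (x : Fin (m + 1) → ℝ) : A :=
  (∑' k : ℕ, (((-1 : ℝ) ^ k * rad m p x ^ (2 * k)) / (2 * k).factorial) •
      lapIterP p k f₀ (projP m p x)) +
  emb v m (normq m p x) *
    ∑' k : ℕ, (((-1 : ℝ) ^ k * rad m p x ^ (2 * k + 1)) / (2 * k + 1).factorial) •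
      lapIterP p k (DopP v p f₀) (projP m p x)

/-- The coefficient `Γ(q/2)(-1)^k r^{2k} / (2^{2k} k! Γ(k + q/2))`. -/
noncomputable def hgckC (q k : ℕ) (r : ℝ) : ℝ :=
  (Real.Gamma ((q : ℝ) / 2) * (-1) ^ k * r ^ (2 * k)) /
    (2 ^ (2 * k) * (k.factorial : ℝ) * Real.Gamma ((k : ℝ) + (q : ℝ) / 2))

/-- The coefficient `Γ(q/2)(-1)^k r^{2k} / (2^{2k+1} k! Γ(k + q/2 + 1))`. -/
noncomputable def gckC' (q k : ℕ) (r : ℝ) : ℝ :=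
  (Real.Gamma ((q : ℝ) / 2) * (-1) ^ k * r ^ (2 * k)) /
    (2 ^ (2 * k + 1) * (k.factorial : ℝ) * Real.Gamma ((k : ℝ) + (q : ℝ) / 2 + 1))

/-- The coefficient `Γ(q/2 + 1)(-1)^k r^{2k} / (2^{2k} k! Γ(k + q/2 + 1))`. -/
noncomputable def hgckC' (q k : ℕ) (r : ℝ) : ℝ :=
  (Real.Gamma ((q : ℝ) / 2 + 1) * (-1) ^ k * r ^ (2 * k)) /
    (2 ^ (2 * k) * (k.factorial : ℝ) * Real.Gamma ((k : ℝ) + (q : ℝ) / 2 + 1))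

/-- The monogenic generalized CK-extension `GCK[A₀]`. -/
noncomputable def GCKe (v : ℕ → A) (m p : ℕ) (A₀ : (Fin (p + 1) → ℝ) → A)
    (x : Fin (m + 1) → ℝ) : A :=
  (∑' k : ℕ, hgckC (m - p) k (rad m p x) • lapIterP p k A₀ (projP m p x)) +
  emb v m (xqpart m p x) *
    ∑' k : ℕ, gckC' (m - p) k (rad m p x) • lapIterP p k (DopP v p A₀) (projP m p x)

/-- The harmonic generalized CK-extension `HGCK[A₀, A₁]`. -/
noncomputable def HGCKe (v : ℕ → A) (m p : ℕ) (A₀ A₁ : (Fin (p + 1) → ℝ) → A)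
    (x : Fin (m + 1) → ℝ) : A :=
  (∑' k : ℕ, hgckC (m - p) k (rad m p x) • lapIterP p k A₀ (projP m p x)) +
  emb v m (xqpart m p x) *
    ∑' k : ℕ, hgckC' (m - p) k (rad m p x) • lapIterP p k A₁ (projP m p x)

/-- The operator `(1/r)∂_r`, extended to `r = 0` by its limit `∂_r²` (on even
functions). -/
noncomputable def T1 (p : ℕ) (G : (Fin (p + 1) → ℝ) × ℝ → A) :
    (Fin (p + 1) → ℝ) × ℝ → A := fun z =>
  if z.2 = 0 then pdSr2 p G z else (z.2)⁻¹ • pdSr p G z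

/-- The operator `∂_r ∘ (1/r)`, extended to `r = 0` by its limit `(1/2)∂_r²` (on odd
functions). -/
noncomputable def T2 (p : ℕ) (G : (Fin (p + 1) → ℝ) × ℝ → A) :
    (Fin (p + 1) → ℝ) × ℝ → A := fun z =>
  if z.2 = 0 then (2 : ℝ)⁻¹ • pdSr2 p G z
  else fderiv ℝ (fun t : ℝ => t⁻¹ • G (z.1, t)) z.2 1

/-- `C_q(k) = (q-1)(q-3)⋯(q-2k+1)`, `C_q(0) = 1`. -/
noncomputable def cq (q k : ℕ) : ℝ :=
  ∏ i ∈ Finset.range k, ((q : ℝ) - (2 * (i : ℝ) + 1))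

/-- Double factorial. -/
def dfac : ℕ → ℕ
  | 0 => 1
  | 1 => 1
  | n + 2 => (n + 2) * dfac n

/-- The Fueter-Sce constant `γ_q = (-1)^{(q-1)/2} (q-1)!!/(q-2)!!`. -/
noncomputable def gammaQ (q : ℕ) : ℝ :=
  (-1 : ℝ) ^ ((q - 1) / 2) * (dfac (q - 1) : ℝ) / (dfac (q - 2) : ℝ)


section Gen
open MeasureTheory Metric
open scoped ContDiff

/-- kernel properties -/
structure IsKer {E ι : Type*} [NormedAddCommGroup E] [NormedSpace ℝ E]
    [MeasurableSpace E] (μ : Measure E) [Fintype ι]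
    (b : Module.Basis ι ℝ E) (ρ : E → ℝ) : Prop where
  smooth : ContDiff ℝ ∞ ρ
  supp : ∀ y, 1 < ‖y‖ → ρ y = 0
  int : ∫ y, ρ y ∂μ = 1
  symm : ∀ j k y, fderiv ℝ (fun y => b.coord k y * ρ y) y (b j)
    = fderiv ℝ (fun y => b.coord j y * ρ y) y (b k)

theorem hasCompactSupport_of_norm {E F : Type*} [NormedAddCommGroup E] [NormedSpace ℝ E]
    [FiniteDimensional ℝ E] [Zero F] (ρ : E → F) (h : ∀ y, 1 < ‖y‖ → ρ y = 0) :
    HasCompactSupport ρ := by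
  apply HasCompactSupport.intro (isCompact_closedBall (0:E) 1)
  intro x hx
  apply h
  simpa using hx

theorem contDiff_coord {E ι : Type*} [NormedAddCommGroup E] [NormedSpace ℝ E]
    [FiniteDimensional ℝ E] (b : Module.Basis ι ℝ E) (k : ι) :
    ContDiff ℝ ∞ (fun y => b.coord k y) :=
  (LinearMap.toContinuousLinearMap (b.coord k)).contDiff

theorem hasFDerivAt_coord {E ι : Type*} [NormedAddCommGroup E] [NormedSpace ℝ E]
    [FiniteDimensional ℝ E] (b : Module.Basis ι ℝ E) (k : ι) (y : E) :
    HasFDerivAt (fun y => b.coord k y) (LinearMap.toContinuousLinearMap (b.coord k)) y :=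
  (LinearMap.toContinuousLinearMap (b.coord k)).hasFDerivAt

theorem exists_ker {E ι : Type*} [NormedAddCommGroup E] [NormedSpace ℝ E]
    [FiniteDimensional ℝ E] [MeasurableSpace E] [BorelSpace E] (μ : Measure E)
    [μ.IsAddHaarMeasure] [Fintype ι] [DecidableEq ι]
    (b : Module.Basis ι ℝ E) : ∃ ρ : E → ℝ, IsKer μ b ρ := by
  set T : ℝ := 1 + ∑ j, ‖b j‖ with hT
  have hT1 : 1 ≤ T := by
    have : 0 ≤ ∑ j, ‖b j‖ := Finset.sum_nonneg fun _ _ => norm_nonneg _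
    linarith
  set ρ₀ : E → ℝ := fun y => expNegInvGlue (1 - T ^ 2 * ∑ j, (b.coord j y) ^ 2) with hρ₀
  have hs : ContDiff ℝ ∞ ρ₀ := by
    refine expNegInvGlue.contDiff.comp ?_
    exact contDiff_const.sub (contDiff_const.mul
      (ContDiff.sum fun j _ => (contDiff_coord b j).pow 2))
  have hsupp : ∀ y, 1 < ‖y‖ → ρ₀ y = 0 := by
    intro y hy
    apply expNegInvGlue.zero_of_nonpos
    by_contra hcon
    push Not at hcon
    have h1 : ∀ j, |b.coord j y| ≤ T⁻¹ := by
      intro j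
      have h2 : (b.coord j y) ^ 2 ≤ ∑ j, (b.coord j y) ^ 2 :=
        Finset.single_le_sum (f := fun j => (b.coord j y) ^ 2)
          (fun _ _ => sq_nonneg _) (Finset.mem_univ j)
      have h3 : (T * |b.coord j y|) ^ 2 ≤ 1 := by
        rw [mul_pow, sq_abs]
        nlinarith [sq_nonneg T]
      have h4 : T * |b.coord j y| ≤ 1 := by
        by_contra hh
        push Not at hh
        nlinarith
      rw [← one_div, le_div_iff₀ (by linarith)]
      linarith
    have h5 : ‖y‖ ≤ 1 := by
      calc ‖y‖ = ‖∑ j, b.coord j y • b j‖ := by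
            congr 1; exact (b.sum_repr y).symm
        _ ≤ ∑ j, ‖b.coord j y • b j‖ := norm_sum_le _ _
        _ ≤ ∑ j, T⁻¹ * ‖b j‖ := by
            apply Finset.sum_le_sum
            intro j _
            rw [norm_smul]
            exact mul_le_mul_of_nonneg_right (h1 j) (norm_nonneg _)
        _ = T⁻¹ * (T - 1) := by rw [← Finset.mul_sum, hT]; ring
        _ ≤ 1 := by
            rw [mul_sub, inv_mul_cancel₀ (by linarith)]
            have : 0 ≤ T⁻¹ := by positivity
            linarith
    linarith
  have hcs := hasCompactSupport_of_norm ρ₀ hsupp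
  have hpos : 0 < ∫ y, ρ₀ y ∂μ := by
    apply Continuous.integral_pos_of_hasCompactSupport_nonneg_nonzero hs.continuous hcs
      (fun y => expNegInvGlue.nonneg _) (x := 0)
    simp only [hρ₀]
    apply ne_of_gt
    apply expNegInvGlue.pos_of_pos
    simp
  have hsymm : ∀ j k y, fderiv ℝ (fun y => b.coord k y * ρ₀ y) y (b j)
    = fderiv ℝ (fun y => b.coord j y * ρ₀ y) y (b k) := by
    have key : ∀ j k y, fderiv ℝ (fun y => b.coord k y * ρ₀ y) y (b j)
      = (if j = k then 1 else 0) * ρ₀ y + b.coord k y * (b.coord j y *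
        (deriv expNegInvGlue (1 - T ^ 2 * ∑ j, (b.coord j y) ^ 2) * (- (T^2 * 2)))) := by
      intro j k y
      have hq : HasFDerivAt (fun y => 1 - T ^ 2 * ∑ j, (b.coord j y) ^ 2)
          (-(T ^ 2 • ∑ i, (2 * b.coord i y) • LinearMap.toContinuousLinearMap (b.coord i))) y := by
        refine HasFDerivAt.const_sub ?_ 1
        refine HasFDerivAt.const_mul ?_ (T^2)
        refine HasFDerivAt.fun_sum fun i _ => ?_
        simpa using (hasFDerivAt_coord b i y).pow 2
      have hd : HasDerivAt expNegInvGlue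
          (deriv expNegInvGlue (1 - T ^ 2 * ∑ j, (b.coord j y) ^ 2))
          (1 - T ^ 2 * ∑ j, (b.coord j y) ^ 2) :=
        ((expNegInvGlue.contDiff (n := 1)).differentiable (by simp) _).hasDerivAt
      have hr := hd.comp_hasFDerivAt y hq
      change HasFDerivAt ρ₀ _ y at hr
      rw [((hasFDerivAt_coord b k y).fun_mul hr).fderiv]
      simp [Finsupp.single_apply, Finset.sum_ite_eq]
      split_ifs <;> ring
    intro j k y
    rw [key, key]
    by_cases h : j = k
    · subst h; rfl
    · rw [if_neg h, if_neg (Ne.symm h)]; ring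
  refine ⟨fun y => (∫ y, ρ₀ y ∂μ)⁻¹ * ρ₀ y, contDiff_const.mul hs, ?_, ?_, ?_⟩
  · intro y hy; simp [hsupp y hy]
  · rw [integral_const_mul, inv_mul_cancel₀ hpos.ne']
  · intro j k y
    have : ∀ i, (fun y => b.coord i y * ((∫ y, ρ₀ y ∂μ)⁻¹ * ρ₀ y)) =
        fun y => (∫ y, ρ₀ y ∂μ)⁻¹ • (b.coord i y * ρ₀ y) := by
      intro i; ext y; simp only [smul_eq_mul]; ring
    have hd : ∀ i, DifferentiableAt ℝ (fun y => b.coord i y * ρ₀ y) y := fun i =>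
      ((contDiff_coord b i).mul hs).differentiable (by simp) y
    rw [this, this, fderiv_fun_const_smul (hd _), fderiv_fun_const_smul (hd _)]
    simp only [smul_apply, hsymm j k y]

theorem ibp {E V : Type*} [NormedAddCommGroup E] [NormedSpace ℝ E]
    [FiniteDimensional ℝ E] [MeasurableSpace E] [BorelSpace E] (μ : Measure E)
    [μ.IsAddHaarMeasure] [NormedAddCommGroup V] [NormedSpace ℝ V]
    (h : E → V) (hh : ContDiff ℝ 1 h) (ψ : E → ℝ) (hψ : ContDiff ℝ 1 ψ)
    (hc : HasCompactSupport ψ) (x : E) (ε : ℝ) (v : E) :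
    ε • ∫ y, ψ y • fderiv ℝ h (x + ε • y) v ∂μ
      = - ∫ y, fderiv ℝ ψ y v • h (x + ε • y) ∂μ := by
  have hsm : ContDiff ℝ 1 (fun y : E => x + ε • y) := contDiff_const.add (contDiff_const_smul ε)
  have hg : ContDiff ℝ 1 (fun y => h (x + ε • y)) := hh.comp hsm
  have hfd : ∀ y, fderiv ℝ (fun y => h (x + ε • y)) y v = ε • fderiv ℝ h (x + ε • y) v := by
    intro y
    have h1 : HasFDerivAt (fun y : E => x + ε • y) (ε • ContinuousLinearMap.id ℝ E) y :=
      ((hasFDerivAt_id y).const_smul ε).const_add x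
    have h2 := ((hh.differentiable (by simp) (x + ε • y)).hasFDerivAt).comp y h1
    have : fderiv ℝ (fun y => h (x + ε • y)) y = _ := h2.fderiv
    rw [this]
    simp
  have hcd : Continuous fun y => fderiv ℝ ψ y v := (hψ.continuous_fderiv (by simp)).clm_apply continuous_const
  have hcg : Continuous fun y => fderiv ℝ (fun y => h (x + ε • y)) y v :=
    (hg.continuous_fderiv (by simp)).clm_apply continuous_const
  have := integral_smul_fderiv_eq_neg_fderiv_smul_of_integrable (μ := μ) (f := ψ)
    (g := fun y => h (x + ε • y)) (v := v) ?_ ?_ ?_ ?_ ?_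
  · rw [← this, ← integral_smul]
    congr 1
    ext y
    rw [hfd, smul_comm]
  · exact (hcd.smul hg.continuous).integrable_of_hasCompactSupport
      (HasCompactSupport.smul_right (hc.fderiv_apply ℝ v))
  · exact (hψ.continuous.smul hcg).integrable_of_hasCompactSupport hc.smul_right
  · exact (hψ.continuous.smul hg.continuous).integrable_of_hasCompactSupport hc.smul_right
  · exact fun y _ => hψ.differentiable (by simp) y
  · exact fun y _ => hg.differentiable (by simp) y

theorem hasDerivAt_J {E V : Type*} [NormedAddCommGroup E] [NormedSpace ℝ E]
    [FiniteDimensional ℝ E] [MeasurableSpace E] [BorelSpace E] (μ : Measure E)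
    [μ.IsAddHaarMeasure] [NormedAddCommGroup V] [NormedSpace ℝ V]
    (h : E → V) (hh : ContDiff ℝ 1 h) (ρ : E → ℝ) (hρ : Continuous ρ)
    (hc : HasCompactSupport ρ) (x : E) (ε : ℝ) :
    HasDerivAt (fun ε : ℝ => ∫ y, ρ y • h (x + ε • y) ∂μ)
      (∫ y, ρ y • fderiv ℝ h (x + ε • y) y ∂μ) ε := by
  have hc1 : ∀ ε : ℝ, Continuous fun y => ρ y • h (x + ε • y) := fun ε =>
    hρ.smul (hh.continuous.comp (by fun_prop))
  have hc3 : Continuous fun q : ℝ × E => fderiv ℝ h (x + q.1 • q.2) q.2 :=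
    ((hh.continuous_fderiv (by simp)).comp (by fun_prop)).clm_apply continuous_snd
  have hc2 : ∀ ε : ℝ, Continuous fun y => ρ y • fderiv ℝ h (x + ε • y) y := fun ε =>
    hρ.smul (hc3.comp (by fun_prop : Continuous fun y : E => (ε, y)))
  have hK : IsCompact ((closedBall ε 1 : Set ℝ) ×ˢ tsupport ρ) :=
    (isCompact_closedBall ε 1).prod hc
  obtain ⟨C, hC⟩ := hK.exists_bound_of_continuousOn hc3.continuousOn
  refine (hasDerivAt_integral_of_dominated_loc_of_deriv_le (𝕜 := ℝ) (μ := μ)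
    (s := closedBall ε 1) (F := fun ε y => ρ y • h (x + ε • y))
    (F' := fun ε y => ρ y • fderiv ℝ h (x + ε • y) y)
    (bound := fun y => ‖ρ y‖ * C)
    (closedBall_mem_nhds ε one_pos) ?_ ?_ ?_ ?_ ?_ ?_).2
  · exact Eventually.of_forall fun ε => (hc1 ε).aestronglyMeasurable
  · exact (hc1 ε).integrable_of_hasCompactSupport hc.smul_right
  · exact (hc2 ε).aestronglyMeasurable
  · refine Eventually.of_forall fun y t ht => ?_
    rw [norm_smul]
    by_cases hy : y ∈ tsupport ρ
    · exact mul_le_mul_of_nonneg_left (hC (t, y) ⟨ht, hy⟩) (norm_nonneg _)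
    · rw [image_eq_zero_of_notMem_tsupport hy]; simp
  · exact (hρ.integrable_of_hasCompactSupport hc).norm.mul_const C
  · refine Eventually.of_forall fun y t _ => ?_
    refine HasDerivAt.const_smul (ρ y) ?_
    have h1 : HasDerivAt (fun t : ℝ => x + t • y) y t := by
      simpa using ((hasDerivAt_id t).smul_const y).const_add x
    exact (hh.differentiable (by simp) (x + t • y)).hasFDerivAt.comp_hasDerivAt t h1

end Gen

section Gen
open MeasureTheory Metric
open scoped ContDiff

/-- Clifford-type relations -/
def IsCl {V ι : Type*} [NormedAddCommGroup V] [NormedSpace ℝ V] [DecidableEq ι]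
    (L L' : ι → V →L[ℝ] V) : Prop :=
  ∀ j k x, L' k (L j x) + L' j (L k x) = if j = k then (2 : ℝ) • x else 0

/-- The first order operator. -/
noncomputable def DD {E V ι : Type*} [NormedAddCommGroup E] [NormedSpace ℝ E]
    [NormedAddCommGroup V] [NormedSpace ℝ V] [Fintype ι]
    (b : Module.Basis ι ℝ E) (L : ι → V →L[ℝ] V) (h : E → V) (z : E) : V :=
  ∑ j, L j (fderiv ℝ h z (b j))

theorem mean_value {E V ι : Type*} [NormedAddCommGroup E] [NormedSpace ℝ E]
    [FiniteDimensional ℝ E] [MeasurableSpace E] [BorelSpace E] (μ : Measure E)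
    [μ.IsAddHaarMeasure] [NormedAddCommGroup V] [NormedSpace ℝ V] [CompleteSpace V]
    [Fintype ι] [DecidableEq ι] (b : Module.Basis ι ℝ E)
    (L L' : ι → V →L[ℝ] V) (hL : IsCl L L') (ρ : E → ℝ) (hρ : IsKer μ b ρ)
    (h : E → V) (hh : ContDiff ℝ 1 h) (x : E) (R : ℝ)
    (hD : ∀ z ∈ ball x R, DD b L h z = 0) (ε : ℝ) (hε : 0 < ε) (hεR : ε < R) :
    ∫ y, ρ y • h (x + ε • y) ∂μ = h x := by
  have hc := hasCompactSupport_of_norm ρ hρ.supp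
  have hJ := hasDerivAt_J μ h hh ρ hρ.smooth.continuous hc x
  have hzero : ∀ t : ℝ, 0 < t → t < R → ∫ y, ρ y • fderiv ℝ h (x + t • y) y ∂μ = 0 := by
    intro t ht htR
    set I : ι → ι → V := fun j k =>
      ∫ y, (b.coord k y * ρ y) • fderiv ℝ h (x + t • y) (b j) ∂μ with hI
    have hcψ : ∀ k, HasCompactSupport fun y => b.coord k y * ρ y := fun k => hc.mul_left
    have hsψ : ∀ k, ContDiff ℝ ∞ fun y => b.coord k y * ρ y := fun k =>
      (contDiff_coord b k).mul hρ.smooth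
    have hcont : ∀ v, Continuous fun y => fderiv ℝ h (x + t • y) v := fun v =>
      ((hh.continuous_fderiv (by simp)).comp (by fun_prop)).clm_apply continuous_const
    have hIntegr : ∀ j k, Integrable
        (fun y => (b.coord k y * ρ y) • fderiv ℝ h (x + t • y) (b j)) μ := fun j k =>
      ((hsψ k).continuous.smul (hcont _)).integrable_of_hasCompactSupport (hcψ k).smul_right
    have hsym : ∀ j k, I j k = I k j := by
      intro j k
      have h1 := ibp μ h hh _ ((hsψ k).of_le (by simp)) (hcψ k) x t (b j)
      have h2 := ibp μ h hh _ ((hsψ j).of_le (by simp)) (hcψ j) x t (b k)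
      simp only [hρ.symm j k] at h1
      rw [← h2] at h1
      exact smul_right_injective V ht.ne' h1
    have hLI : ∀ k, ∑ j, L j (I j k) = 0 := by
      intro k
      have : ∀ j, L j (I j k) =
          ∫ y, L j ((b.coord k y * ρ y) • fderiv ℝ h (x + t • y) (b j)) ∂μ := fun j =>
        ((L j).integral_comp_comm (hIntegr j k)).symm
      simp only [this]
      rw [← integral_finsetSum _ fun j _ => (L j).integrable_comp (hIntegr j k)]
      rw [← integral_zero E V (μ := μ)]
      congr 1
      ext y
      simp only [map_smul]
      rw [← Finset.smul_sum]
      by_cases hy : 1 < ‖y‖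
      · rw [hρ.supp y hy]; simp
      · push Not at hy
        have : x + t • y ∈ ball x R := by
          rw [mem_ball, dist_eq_norm, add_sub_cancel_left, norm_smul, Real.norm_of_nonneg ht.le]
          nlinarith
        have := hD _ this
        unfold DD at this
        rw [this, smul_zero]
    have hS1 : ∑ k, ∑ j, L' k (L j (I j k)) = 0 := by
      apply Finset.sum_eq_zero
      intro k _
      rw [← map_sum, hLI, map_zero]
    have hS2 : ∑ k, ∑ j, L' j (L k (I j k)) = 0 := by
      rw [Finset.sum_comm, ← hS1]
      refine Finset.sum_congr rfl fun k _ => Finset.sum_congr rfl fun j _ => ?_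
      rw [hsym]
    have hS : ∑ k, (2 : ℝ) • I k k = 0 := by
      have : ∑ k, ∑ j, (L' k (L j (I j k)) + L' j (L k (I j k))) = 0 := by
        simp only [Finset.sum_add_distrib, hS1, hS2, add_zero]
      rw [← this]
      refine Finset.sum_congr rfl fun k _ => ?_
      simp only [hL _ _ _, Finset.sum_ite_eq', Finset.mem_univ, if_true]
    rw [← Finset.smul_sum, smul_eq_zero] at hS
    have hS' := hS.resolve_left two_ne_zero
    rw [← hS', ← integral_finsetSum _ fun k _ => hIntegr k k]
    congr 1
    ext y
    conv_lhs => rw [← b.sum_repr y]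
    rw [map_sum, Finset.smul_sum]
    refine Finset.sum_congr rfl fun k _ => ?_
    rw [map_smul, smul_smul, b.sum_repr, mul_comm]
    rfl
  set J : ℝ → V := fun ε => ∫ y, ρ y • h (x + ε • y) ∂μ with hJdef
  have hJc : Continuous J := continuous_iff_continuousAt.2 fun t => (hJ t).continuousAt
  have hconst : ∀ δ, 0 < δ → δ < ε → J ε = J δ := by
    intro δ hδ hδε
    refine constant_of_has_deriv_right_zero (a := δ) (b := ε) hJc.continuousOn ?_ ε
      ⟨hδε.le, le_rfl⟩
    intro t ht
    have := hJ t
    rw [hzero t (by linarith [ht.1]) (by linarith [ht.2])] at this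
    exact this.hasDerivWithinAt
  have hlim : Tendsto J (𝓝[>] 0) (𝓝 (J 0)) := (hJc.tendsto 0).mono_left nhdsWithin_le_nhds
  have hlim2 : Tendsto J (𝓝[>] 0) (𝓝 (J ε)) := by
    refine tendsto_const_nhds.congr' ?_
    filter_upwards [Ioo_mem_nhdsGT hε] with δ hδ using hconst δ hδ.1 hδ.2
  have := tendsto_nhds_unique hlim2 hlim
  change J ε = h x
  rw [this]
  simp only [hJdef, zero_smul, add_zero]
  rw [integral_smul_const, hρ.int, one_smul]

theorem globalize {E V : Type*} [NormedAddCommGroup E] [NormedSpace ℝ E]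
    [FiniteDimensional ℝ E] [NormedAddCommGroup V] [NormedSpace ℝ V]
    {n : ℕ∞} (h : E → V) (U : Set E) (hU : IsOpen U) (hh : ContDiffOn ℝ n h U)
    (x : E) (R R' : ℝ) (hR : 0 < R) (hRR : R < R') (hsub : closedBall x R' ⊆ U) :
    ∃ g : E → V, ContDiff ℝ n g ∧ ∀ z ∈ ball x R, g z = h z := by
  let χ : ContDiffBump x := ⟨R, R', hR, hRR⟩
  refine ⟨fun z => χ z • h z, ?_, ?_⟩
  · rw [contDiff_iff_contDiffAt]
    intro z
    by_cases hz : z ∈ U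
    · exact χ.contDiff.contDiffAt.smul (hh.contDiffAt (hU.mem_nhds hz))
    · have : z ∉ tsupport χ := by
        rw [χ.tsupport_eq]; exact fun h => hz (hsub h)
      rw [notMem_tsupport_iff_eventuallyEq] at this
      refine (contDiffAt_const (c := (0 : V))).congr_of_eventuallyEq ?_
      filter_upwards [this] with y hy
      rw [hy]; simp
  · intro z hz
    show χ z • h z = h z
    rw [χ.one_of_mem_closedBall (ball_subset_closedBall hz), one_smul]

theorem DD_congr {E V ι : Type*} [NormedAddCommGroup E] [NormedSpace ℝ E]
    [NormedAddCommGroup V] [NormedSpace ℝ V] [Fintype ι]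
    (b : Module.Basis ι ℝ E) (L : ι → V →L[ℝ] V) (h g : E → V) (z : E) (U : Set E)
    (hU : IsOpen U) (hz : z ∈ U) (hg : ∀ z ∈ U, g z = h z) : DD b L g z = DD b L h z := by
  unfold DD
  have : g =ᶠ[𝓝 z] h := by
    filter_upwards [hU.mem_nhds hz] with y hy using hg y hy
  rw [this.fderiv_eq]

theorem smooth_of_DD {E V ι : Type*} [NormedAddCommGroup E] [NormedSpace ℝ E]
    [FiniteDimensional ℝ E] [NormedAddCommGroup V] [NormedSpace ℝ V] [CompleteSpace V]
    [Fintype ι] [DecidableEq ι] (b : Module.Basis ι ℝ E)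
    (L L' : ι → V →L[ℝ] V) (hL : IsCl L L')
    (h : E → V) (U : Set E) (hU : IsOpen U) (hh : ContDiffOn ℝ 1 h U)
    (hD : ∀ z ∈ U, DD b L h z = 0) : ContDiffOn ℝ ∞ h U := by
  borelize E
  let μ : Measure E := Measure.addHaar
  obtain ⟨ρ, hρ⟩ := exists_ker μ b
  intro a ha
  obtain ⟨R₀, hR₀, hsub⟩ := Metric.isOpen_iff.1 hU a ha
  set R := R₀ / 4 with hR
  have hRpos : 0 < R := by positivity
  obtain ⟨g, hg, hgh⟩ := globalize (n := 1) h U hU hh a (2 * R) (3 * R) (by linarith) (by linarith)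
    ((closedBall_subset_ball (by linarith)).trans hsub)
  have hmv : ∀ x ∈ ball a R, ∫ y, ρ y • g (x + (R / 2) • y) ∂μ = g x := by
    intro x hx
    refine mean_value μ b L L' hL ρ hρ g hg x R ?_ (R / 2) (by linarith) (by linarith)
    intro z hz
    have hz' : z ∈ ball a (2 * R) := by
      rw [mem_ball] at *
      linarith [dist_triangle z x a]
    rw [DD_congr b L h g z _ isOpen_ball hz' hgh]
    exact hD z (hsub (ball_subset_ball (by linarith) hz'))
  set ρ' : E → ℝ := fun y => ρ (-y) with hρ'
  set g₂ : E → V := fun u => g ((R / 2) • u) with hg₂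
  have hc' : HasCompactSupport ρ' := by
    apply hasCompactSupport_of_norm
    intro y hy
    exact hρ.supp _ (by simpa using hy)
  have hsm : ContDiff ℝ ((⊤ : ℕ∞) : WithTop ℕ∞) (convolution ρ' g₂ (ContinuousLinearMap.lsmul ℝ ℝ) μ) := by
    refine hc'.contDiff_convolution_left _ (hρ.smooth.comp contDiff_neg) ?_
    exact (hg.continuous.comp (by fun_prop)).locallyIntegrable
  have heq : ∀ x ∈ ball a R,
      h x = convolution ρ' g₂ (ContinuousLinearMap.lsmul ℝ ℝ) μ ((R / 2)⁻¹ • x) := by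
    intro x hx
    rw [← hgh x (ball_subset_ball (by linarith) hx), ← hmv x hx, convolution_def,
      ← integral_neg_eq_self]
    congr 1
    ext y
    simp only [hρ', hg₂, ContinuousLinearMap.lsmul_apply, smul_sub, smul_neg]
    rw [smul_inv_smul₀ (by linarith), sub_eq_add_neg]
  refine ContDiffAt.contDiffWithinAt ?_
  refine ContDiffAt.congr_of_eventuallyEq
    (f := fun x => convolution ρ' g₂ (ContinuousLinearMap.lsmul ℝ ℝ) μ ((R / 2)⁻¹ • x)) ?_ ?_
  · exact (hsm.comp (contDiff_const_smul _)).contDiffAt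
  · filter_upwards [ball_mem_nhds a hRpos] with x hx using heq x hx

/-- Smooth solutions. -/
def Mo {E V ι : Type*} [NormedAddCommGroup E] [NormedSpace ℝ E]
    [NormedAddCommGroup V] [NormedSpace ℝ V] [Fintype ι]
    (b : Module.Basis ι ℝ E) (L : ι → V →L[ℝ] V) (U : Set E) (h : E → V) : Prop :=
  ContDiffOn ℝ ∞ h U ∧ ∀ z ∈ U, DD b L h z = 0

theorem Mo.deriv {E V ι : Type*} [NormedAddCommGroup E] [NormedSpace ℝ E]
    [NormedAddCommGroup V] [NormedSpace ℝ V] [Fintype ι]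
    {b : Module.Basis ι ℝ E} {L : ι → V →L[ℝ] V} {U : Set E} {h : E → V}
    (hh : Mo b L U h) (hU : IsOpen U) (e : E) : Mo b L U (fun z => fderiv ℝ h z e) := by
  have h1 : ContDiffOn ℝ ∞ (fderiv ℝ h) U := hh.1.fderiv_of_isOpen hU (by simp)
  refine ⟨h1.clm_apply contDiffOn_const, ?_⟩
  intro z hz
  have hd1 : DifferentiableAt ℝ (fderiv ℝ h) z :=
    (h1.contDiffAt (hU.mem_nhds hz)).differentiableAt (by simp)
  have hsymm : ∀ u v, fderiv ℝ (fderiv ℝ h) z u v = fderiv ℝ (fderiv ℝ h) z v u := by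
    have : IsSymmSndFDerivAt ℝ h z :=
      (hh.1.contDiffAt (hU.mem_nhds hz)).isSymmSndFDerivAt
        (by
          rw [minSmoothness_of_isRCLikeNormedField]
          exact WithTop.coe_le_coe.2 (le_top : (2 : ℕ∞) ≤ ⊤))
    exact fun u v => this u v
  have hap : ∀ v, HasFDerivAt (fun z => fderiv ℝ h z v)
      ((fderiv ℝ (fderiv ℝ h) z).flip v) z := by
    intro v
    have := hd1.hasFDerivAt.clm_apply (hasFDerivAt_const v z)
    simpa using this
  have hDD : HasFDerivAt (DD b L h)
      (∑ j, (L j).comp ((fderiv ℝ (fderiv ℝ h) z).flip (b j))) z := by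
    have := HasFDerivAt.fun_sum (u := Finset.univ) fun j _ => (L j).hasFDerivAt.comp z (hap (b j))
    exact this
  have hz0 : DD b L h =ᶠ[𝓝 z] fun _ => 0 := by
    filter_upwards [hU.mem_nhds hz] with y hy using hh.2 y hy
  have h0 : ∑ j, (L j).comp ((fderiv ℝ (fderiv ℝ h) z).flip (b j)) = 0 := by
    rw [← hDD.fderiv, hz0.fderiv_eq]; simp
  have h2 := congrArg (fun T => T e) h0
  simp only [sum_apply, ContinuousLinearMap.comp_apply,
    ContinuousLinearMap.flip_apply, zero_apply] at h2
  unfold DD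
  rw [← h2]
  refine Finset.sum_congr rfl fun j _ => ?_
  rw [(hap e).fderiv, ContinuousLinearMap.flip_apply, hsymm]

theorem grad_est {E V ι : Type*} [NormedAddCommGroup E] [NormedSpace ℝ E]
    [FiniteDimensional ℝ E] [NormedAddCommGroup V] [NormedSpace ℝ V] [CompleteSpace V]
    [Fintype ι] [DecidableEq ι] (b : Module.Basis ι ℝ E)
    (L L' : ι → V →L[ℝ] V) (hL : IsCl L L') :
    ∃ C : ℝ, 0 < C ∧ ∀ (h : E → V) (x : E) (R M : ℝ), 0 < R → Mo b L (ball x R) h →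
      (∀ z ∈ ball x R, ‖h z‖ ≤ M) → ∀ e : E, ‖e‖ ≤ 1 → ‖fderiv ℝ h x e‖ ≤ C / R * M := by
  borelize E
  let μ : Measure E := Measure.addHaar
  obtain ⟨ρ, hρ⟩ := exists_ker μ b
  have hc := hasCompactSupport_of_norm ρ hρ.supp
  have hρ1 : ContDiff ℝ 1 ρ := hρ.smooth.of_le (by simp)
  have hcn : Continuous fun y => ‖fderiv ℝ ρ y‖ := (hρ1.continuous_fderiv (by simp)).norm
  have hin : Integrable (fun y => ‖fderiv ℝ ρ y‖) μ :=
    hcn.integrable_of_hasCompactSupport (hc.fderiv ℝ).norm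
  set C₀ := ∫ y, ‖fderiv ℝ ρ y‖ ∂μ with hC₀
  have hC₀p : 0 ≤ C₀ := integral_nonneg fun _ => norm_nonneg _
  refine ⟨4 * (C₀ + 1), by linarith, ?_⟩
  intro h x R M hR hh hM e he
  have hM0 : 0 ≤ M := (norm_nonneg _).trans (hM x (mem_ball_self hR))
  obtain ⟨g, hg, hgh⟩ := globalize (n := ⊤) h _ isOpen_ball hh.1 x (R / 2) (3 * R / 4)
    (by linarith) (by linarith) (closedBall_subset_ball (by linarith))
  have hsub : ball x (R / 2) ⊆ ball x R := ball_subset_ball (by linarith)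
  have hMog : Mo b L (ball x (R / 2)) g :=
    ⟨hg.contDiffOn, fun z hz => by
      rw [DD_congr b L h g z _ isOpen_ball hz hgh]; exact hh.2 z (hsub hz)⟩
  have hMog' := hMog.deriv isOpen_ball e
  have hg1 : ContDiff ℝ 1 g := hg.of_le (by simp)
  have hsm : ContDiff ℝ 1 (fun z => fderiv ℝ g z e) :=
    (hg.fderiv_right (m := 1) (by norm_cast)).clm_apply contDiff_const
  have hmv := mean_value μ b L L' hL ρ hρ _ hsm x (R / 2) hMog'.2 (R / 4) (by linarith)
    (by linarith)
  have hib := ibp μ g hg1 ρ hρ1 hc x (R / 4) e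
  rw [hmv] at hib
  have hfd : fderiv ℝ h x e = fderiv ℝ g x e := by
    have : g =ᶠ[𝓝 x] h := by
      filter_upwards [ball_mem_nhds x (by linarith : 0 < R / 2)] with y hy using hgh y hy
    rw [this.fderiv_eq]
  rw [hfd]
  have hb : ‖∫ y, fderiv ℝ ρ y e • g (x + (R / 4) • y) ∂μ‖ ≤ ∫ y, ‖fderiv ℝ ρ y‖ * M ∂μ := by
    apply norm_integral_le_of_norm_le (hin.mul_const M)
    refine Eventually.of_forall fun y => ?_
    rw [norm_smul]
    by_cases hy : 1 < ‖y‖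
    · have : fderiv ℝ ρ y = 0 := by
        have : ρ =ᶠ[𝓝 y] fun _ => 0 := by
          filter_upwards [(isOpen_lt continuous_const continuous_norm).mem_nhds hy] with u hu
            using hρ.supp u hu
        rw [this.fderiv_eq]; simp
      rw [this]; simp
    · push Not at hy
      have hmem : x + (R / 4) • y ∈ ball x (R / 2) := by
        rw [mem_ball, dist_eq_norm, add_sub_cancel_left, norm_smul,
          Real.norm_of_nonneg (by linarith)]
        nlinarith
      rw [hgh _ hmem]
      refine mul_le_mul ?_ (hM _ (hsub hmem)) (norm_nonneg _) (norm_nonneg _)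
      exact ((fderiv ℝ ρ y).le_opNorm e).trans
        (mul_le_of_le_one_right (norm_nonneg _) he)
  rw [integral_mul_const, ← norm_neg, ← hib, norm_smul, Real.norm_of_nonneg (by linarith)] at hb
  have : ‖fderiv ℝ g x e‖ ≤ 4 * C₀ * M / R := by
    rw [le_div_iff₀ hR]; linarith
  refine this.trans ?_
  rw [div_mul_eq_mul_div]
  gcongr
  linarith

end Gen

section Gen
open MeasureTheory Metric
open scoped ContDiff

/-- Iterated directional derivative. -/
noncomputable def dk {E V : Type*} [NormedAddCommGroup E] [NormedSpace ℝ E]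
    [NormedAddCommGroup V] [NormedSpace ℝ V] (e : E) (k : ℕ) (h : E → V) : E → V :=
  (fun (g : E → V) z => fderiv ℝ g z e)^[k] h

theorem Mo.dk {E V ι : Type*} [NormedAddCommGroup E] [NormedSpace ℝ E]
    [NormedAddCommGroup V] [NormedSpace ℝ V] [Fintype ι]
    {b : Module.Basis ι ℝ E} {L : ι → V →L[ℝ] V} {U : Set E}
    (hU : IsOpen U) (e : E) (k : ℕ) :
    ∀ {h : E → V}, Mo b L U h → Mo b L U (dk e k h) := by
  induction k with
  | zero => intro h hh; exact hh
  | succ k ih => intro h hh; exact ih (hh.deriv hU e)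

theorem Mo.mono {E V ι : Type*} [NormedAddCommGroup E] [NormedSpace ℝ E]
    [NormedAddCommGroup V] [NormedSpace ℝ V] [Fintype ι]
    {b : Module.Basis ι ℝ E} {L : ι → V →L[ℝ] V} {U W : Set E} {h : E → V}
    (hh : Mo b L U h) (hW : W ⊆ U) : Mo b L W h :=
  ⟨hh.1.mono hW, fun z hz => hh.2 z (hW hz)⟩

theorem iter_est {E V ι : Type*} [NormedAddCommGroup E] [NormedSpace ℝ E]
    [NormedAddCommGroup V] [NormedSpace ℝ V] [Fintype ι]
    (b : Module.Basis ι ℝ E) (L : ι → V →L[ℝ] V) (C : ℝ)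
    (hC : ∀ (h : E → V) (x : E) (R M : ℝ), 0 < R → Mo b L (ball x R) h →
      (∀ z ∈ ball x R, ‖h z‖ ≤ M) → ∀ e : E, ‖e‖ ≤ 1 → ‖fderiv ℝ h x e‖ ≤ C / R * M)
    (a : E) (e : E) (he : ‖e‖ ≤ 1) (R δ : ℝ) (hδ : 0 < δ) (k : ℕ) :
    ∀ (h : E → V) (M : ℝ), Mo b L (ball a (R + k * δ)) h →
      (∀ z ∈ ball a (R + k * δ), ‖h z‖ ≤ M) →
      ∀ x ∈ ball a R, ‖dk e k h x‖ ≤ (C / δ) ^ k * M := by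
  induction k with
  | zero =>
    intro h M _ hM x hx
    simp only [Nat.cast_zero, zero_mul, add_zero] at hM
    simpa [dk] using hM x hx
  | succ k ih =>
    intro h M hh hM x hx
    have hsub : ball a (R + k * δ) ⊆ ball a (R + (k + 1 : ℕ) * δ) :=
      ball_subset_ball (by push_cast; nlinarith)
    have h1 := ih (fun z => fderiv ℝ h z e) (C / δ * M)
      ((hh.deriv isOpen_ball e).mono hsub) ?_ x hx
    · rw [pow_succ, mul_assoc]; exact h1
    · intro z hz
      have hs : ball z δ ⊆ ball a (R + (k + 1 : ℕ) * δ) := by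
        apply ball_subset_ball'
        rw [mem_ball] at hz
        push_cast; linarith
      exact hC h z δ M hδ (hh.mono hs) (fun y hy => hM y (hs hy)) e he

theorem taylor0 {V : Type*} [NormedAddCommGroup V] [NormedSpace ℝ V] (S M : ℝ) (N : ℕ) :
    ∀ G : ℕ → ℝ → V, (∀ k, ∀ s ∈ Set.Icc 0 S, HasDerivAt (G k) (G (k + 1) s) s) →
      (∀ k, G k 0 = 0) → (∀ s ∈ Set.Icc 0 S, ‖G N s‖ ≤ M) →
      ∀ s ∈ Set.Icc 0 S, ‖G 0 s‖ ≤ M * (s ^ N / (N.factorial : ℝ)) := by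
  induction N with
  | zero => intro G _ _ hM s hs; simpa using hM s hs
  | succ N ih =>
    intro G hG h0 hM
    have h1 := ih (fun k => G (k + 1)) (fun k => hG (k + 1)) (fun k => h0 (k + 1)) hM
    refine image_norm_le_of_norm_deriv_right_le_deriv_boundary (f := G 0) (f' := G 1)
      (a := 0) (b := S) (B := fun s => M * (s ^ (N + 1) / ((N + 1).factorial : ℝ)))
      (B' := fun s => M * (s ^ N / (N.factorial : ℝ))) ?_ ?_ ?_ ?_ ?_
    · exact fun s hs => (hG 0 s hs).continuousAt.continuousWithinAt
    · exact fun s hs => (hG 0 s ⟨hs.1, hs.2.le⟩).hasDerivWithinAt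
    · simp [h0 0]
    · intro s
      have := ((hasDerivAt_pow (N + 1) s).div_const ((N + 1).factorial : ℝ)).const_mul M
      refine this.congr_deriv ?_
      rw [Nat.factorial_succ]
      have : (N.factorial : ℝ) ≠ 0 := by positivity
      push_cast
      field_simp
    · exact fun s hs => h1 s ⟨hs.1, hs.2.le⟩

theorem vanish_line {E V ι : Type*} [NormedAddCommGroup E] [NormedSpace ℝ E]
    [FiniteDimensional ℝ E] [NormedAddCommGroup V] [NormedSpace ℝ V] [CompleteSpace V]
    [Fintype ι] [DecidableEq ι] (b : Module.Basis ι ℝ E)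
    (L L' : ι → V →L[ℝ] V) (hL : IsCl L L') :
    ∃ c : ℝ, 0 < c ∧ c < 1 ∧ ∀ (h : E → V) (U : Set E) (a e : E) (R s : ℝ), IsOpen U → 0 < R →
      Mo b L U h → closedBall a (2 * R) ⊆ U → ‖e‖ ≤ 1 → (∀ k, dk e k h a = 0) →
      0 ≤ s → s ≤ c * R → h (a + s • e) = 0 := by
  obtain ⟨C, hC0, hC⟩ := grad_est b L L' hL
  set c := min (1 / 2) (1 / (2 * Real.exp 1 * C)) with hc
  have hcpos : 0 < c := by
    apply lt_min <;> positivity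
  have hc2 : c ≤ 1 / 2 := min_le_left _ _
  refine ⟨c, hcpos, by linarith, ?_⟩
  intro h U a e R s hU hR hh hsub he h0 hs hsc
  obtain ⟨M, hM⟩ := (isCompact_closedBall a (2 * R)).exists_bound_of_continuousOn
    (hh.1.continuousOn.mono hsub)
  have hM0 : 0 ≤ M := (norm_nonneg _).trans (hM a (mem_closedBall_self (by linarith)))
  have hsmall : s * (Real.exp 1 * C) / R ≤ 1 / 2 := by
    rw [div_le_iff₀ hR]
    have : c * (2 * Real.exp 1 * C) ≤ 1 := by
      rw [← le_div_iff₀ (by positivity)]; exact min_le_right _ _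
    have h2 : s * (Real.exp 1 * C) ≤ c * R * (Real.exp 1 * C) :=
      mul_le_mul_of_nonneg_right hsc (by positivity)
    nlinarith
  have hmem : ∀ t ∈ Set.Icc 0 s, a + t • e ∈ ball a R := by
    intro t ht
    rw [mem_ball, dist_eq_norm, add_sub_cancel_left, norm_smul, Real.norm_of_nonneg ht.1]
    nlinarith [ht.1, ht.2, norm_nonneg e]
  have hRU : ball a R ⊆ U :=
    (ball_subset_closedBall.trans (closedBall_subset_closedBall (by linarith))).trans hsub
  have key : ∀ N : ℕ, ‖h (a + s • e)‖ ≤ M * (1 / 2) ^ (N + 1) := by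
    intro N'
    set N := N' + 1 with hN
    have hNpos : (0 : ℝ) < N := by positivity
    have hball : ball a (R + N * (R / N)) ⊆ closedBall a (2 * R) := by
      rw [mul_div_cancel₀ _ hNpos.ne', ← two_mul]
      exact ball_subset_closedBall
    have hest := iter_est b L C hC a e he R (R / N) (by positivity) N h M
      (hh.mono (hball.trans hsub)) (fun z hz => hM z (hball hz))
    have ht := taylor0 s ((C / (R / N)) ^ N * M) N (fun k t => dk e k h (a + t • e)) ?_ ?_ ?_ s
      ⟨hs, le_rfl⟩
    · refine ht.trans ?_
      have hexp : (N : ℝ) ^ N / (N.factorial : ℝ) ≤ Real.exp 1 ^ N := by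
        rw [← Real.exp_nat_mul, mul_one]
        exact Real.pow_div_factorial_le_exp _ hNpos.le _
      calc (C / (R / N)) ^ N * M * (s ^ N / (N.factorial : ℝ))
          = M * ((C * s / R) ^ N * ((N : ℝ) ^ N / (N.factorial : ℝ))) := by
            rw [div_div_eq_mul_div]
            simp only [div_pow, mul_pow]
            ring
        _ ≤ M * ((C * s / R) ^ N * Real.exp 1 ^ N) := by gcongr
        _ = M * (s * (Real.exp 1 * C) / R) ^ N := by
            rw [← mul_pow]; congr 2; ring
        _ ≤ M * (1 / 2) ^ N := by gcongr
    · intro k t ht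
      have hd : DifferentiableAt ℝ (dk e k h) (a + t • e) :=
        ((Mo.dk hU e k hh).1.contDiffAt (hU.mem_nhds (hRU (hmem t ht)))).differentiableAt (by simp)
      have h1 : HasDerivAt (fun t : ℝ => a + t • e) e t := by
        simpa using ((hasDerivAt_id t).smul_const e).const_add a
      have h2 := hd.hasFDerivAt.comp_hasDerivAt t h1
      have h3 : dk e (k + 1) h (a + t • e) = fderiv ℝ (dk e k h) (a + t • e) e := by
        unfold dk; rw [Function.iterate_succ_apply']
      show HasDerivAt (fun t => dk e k h (a + t • e)) (dk e (k + 1) h (a + t • e)) t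
      rw [h3]
      exact h2
    · intro k; simpa using h0 k
    · intro t ht; exact hest _ (hmem t ht)
  have hlim : Tendsto (fun N : ℕ => M * (1 / 2 : ℝ) ^ (N + 1)) atTop (𝓝 0) := by
    have := (tendsto_pow_atTop_nhds_zero_of_lt_one (r := (1 / 2 : ℝ)) (by norm_num)
      (by norm_num)).comp (tendsto_add_atTop_nat 1)
    simpa using this.const_mul M
  have := ge_of_tendsto' hlim key
  exact norm_le_zero_iff.1 this

theorem dk_eventually_zero {E V : Type*} [NormedAddCommGroup E] [NormedSpace ℝ E]
    [NormedAddCommGroup V] [NormedSpace ℝ V] (e a : E) (k : ℕ) :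
    ∀ h : E → V, (∀ᶠ z in 𝓝 a, h z = 0) → dk e k h a = 0 := by
  induction k with
  | zero => intro h hh; exact hh.self_of_nhds
  | succ k ih =>
    intro h hh
    refine ih (fun z => fderiv ℝ h z e) ?_
    filter_upwards [hh.eventually_nhds] with z hz
    have : h =ᶠ[𝓝 z] fun _ => 0 := hz
    rw [this.fderiv_eq]; simp

theorem identity_open {E V ι : Type*} [NormedAddCommGroup E] [NormedSpace ℝ E]
    [FiniteDimensional ℝ E] [NormedAddCommGroup V] [NormedSpace ℝ V] [CompleteSpace V]
    [Fintype ι] [DecidableEq ι] (b : Module.Basis ι ℝ E)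
    (L L' : ι → V →L[ℝ] V) (hL : IsCl L L') (U : Set E) (hU : IsOpen U) (hUc : IsPreconnected U)
    (h : E → V) (hh : Mo b L U h) (a₀ : E) (ha₀ : a₀ ∈ U) (hz : ∀ᶠ z in 𝓝 a₀, h z = 0) :
    ∀ z ∈ U, h z = 0 := by
  obtain ⟨c, hc0, hc1, hc⟩ := vanish_line b L L' hL
  set u : Set E := {x | ∀ᶠ z in 𝓝 x, h z = 0} with hu
  have huo : IsOpen u := isOpen_setOfPred_eventually_nhds
  have : U ⊆ u := by
    refine hUc.subset_of_closure_inter_subset huo ⟨a₀, ha₀, hz⟩ ?_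
    rintro x ⟨hxc, hxU⟩
    obtain ⟨R₀, hR₀, hsub⟩ := Metric.isOpen_iff.1 hU x hxU
    set R := R₀ / 4 with hR
    have hRpos : 0 < R := by positivity
    obtain ⟨a, ha, hda⟩ := Metric.mem_closure_iff.1 hxc (c * R) (by positivity)
    have hca : closedBall a (2 * R) ⊆ U := by
      refine Set.Subset.trans ?_ hsub
      intro z hz
      rw [mem_closedBall] at hz
      rw [mem_ball]
      have := dist_triangle z a x
      rw [dist_comm a x] at this
      nlinarith
    have hxm : x ∈ ball a (c * R) := hda
    show ∀ᶠ z in 𝓝 x, h z = 0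
    filter_upwards [isOpen_ball.mem_nhds hxm] with z hz
    have hze : a + ‖z - a‖ • (‖z - a‖⁻¹ • (z - a)) = z := by
      by_cases h0 : z - a = 0
      · rw [h0]; simp [sub_eq_zero.1 h0]
      · rw [smul_inv_smul₀ (norm_ne_zero_iff.2 h0)]; abel
    rw [← hze]
    refine hc h U a _ R _ hU hRpos hh hca ?_ ?_ (norm_nonneg _) ?_
    · rw [norm_smul, norm_inv, norm_norm]; exact inv_mul_le_one
    · exact fun k => dk_eventually_zero _ _ _ _ ha
    · rw [mem_ball, dist_eq_norm] at hz; exact hz.le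
  exact fun z hz => (this hz).self_of_nhds

theorem normal_deriv_zero {E V ι : Type*} [NormedAddCommGroup E] [NormedSpace ℝ E]
    [FiniteDimensional ℝ E] [NormedAddCommGroup V] [NormedSpace ℝ V]
    [Fintype ι] [DecidableEq ι] (b : Module.Basis ι ℝ E)
    (L L' : ι → V →L[ℝ] V) (hL : IsCl L L') (U : Set E) (hU : IsOpen U) (i : ι)
    (h : E → V) (hh : Mo b L U h) (h0 : ∀ z ∈ U, b.coord i z = 0 → h z = 0) :
    ∀ z ∈ U, b.coord i z = 0 → fderiv ℝ h z (b i) = 0 := by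
  intro z hz hzi
  have hd : DifferentiableAt ℝ h z :=
    (hh.1.contDiffAt (hU.mem_nhds hz)).differentiableAt (by simp)
  have htan : ∀ j, j ≠ i → fderiv ℝ h z (b j) = 0 := by
    intro j hj
    have h1 : HasDerivAt (fun t : ℝ => z + t • b j) (b j) 0 := by
      simpa using ((hasDerivAt_id (0 : ℝ)).smul_const (b j)).const_add z
    have hd' : HasFDerivAt h (fderiv ℝ h z) (z + (0 : ℝ) • b j) := by
      simpa using hd.hasFDerivAt
    have h2 := hd'.comp_hasDerivAt (0 : ℝ) h1
    have h3 : (h ∘ fun t : ℝ => z + t • b j) =ᶠ[𝓝 0] fun _ => 0 := by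
      have hcont : Tendsto (fun t : ℝ => z + t • b j) (𝓝 0) (𝓝 z) := by
        have : Continuous (fun t : ℝ => z + t • b j) := by fun_prop
        simpa using this.tendsto 0
      filter_upwards [hcont (hU.mem_nhds hz)] with t ht
      refine h0 _ ht ?_
      rw [map_add, hzi, map_smul]
      simp [hj]
    rw [← h2.deriv, h3.deriv_eq]; simp
  have hDz := hh.2 z hz
  unfold DD at hDz
  rw [Finset.sum_eq_single i (fun j _ hj => by rw [htan j hj, map_zero])
    (fun hi => absurd (Finset.mem_univ i) hi)] at hDz
  have := hL i i (fderiv ℝ h z (b i))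
  rw [hDz, if_pos rfl, map_zero, add_zero] at this
  exact (smul_eq_zero.1 this.symm).resolve_left two_ne_zero

theorem normal_dk_zero {E V ι : Type*} [NormedAddCommGroup E] [NormedSpace ℝ E]
    [FiniteDimensional ℝ E] [NormedAddCommGroup V] [NormedSpace ℝ V]
    [Fintype ι] [DecidableEq ι] (b : Module.Basis ι ℝ E)
    (L L' : ι → V →L[ℝ] V) (hL : IsCl L L') (U : Set E) (hU : IsOpen U) (i : ι) (t : ℝ) (k : ℕ) :
    ∀ (h : E → V) (_ : Mo b L U h) (_ : ∀ z ∈ U, b.coord i z = 0 → h z = 0),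
      ∀ z ∈ U, b.coord i z = 0 → dk (t • b i) k h z = 0 := by
  induction k with
  | zero => intro h _ h0; exact h0
  | succ k ih =>
    intro h hh h0
    refine ih _ (hh.deriv hU _) ?_
    intro z hz hzi
    show fderiv ℝ h z (t • b i) = 0
    rw [map_smul, normal_deriv_zero b L L' hL U hU i h hh h0 z hz hzi, smul_zero]

theorem identity_hyperplane {E V ι : Type*} [NormedAddCommGroup E] [NormedSpace ℝ E]
    [FiniteDimensional ℝ E] [NormedAddCommGroup V] [NormedSpace ℝ V] [CompleteSpace V]
    [Fintype ι] [DecidableEq ι] (b : Module.Basis ι ℝ E)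
    (L L' : ι → V →L[ℝ] V) (hL : IsCl L L') (U : Set E) (hU : IsOpen U) (hUc : IsPreconnected U)
    (i : ι) (h : E → V) (hh1 : ContDiffOn ℝ 1 h U) (hD : ∀ z ∈ U, DD b L h z = 0)
    (a : E) (ha : a ∈ U) (hai : b.coord i a = 0)
    (h0 : ∀ z ∈ U, b.coord i z = 0 → h z = 0) :
    ∀ z ∈ U, h z = 0 := by
  have hh : Mo b L U h := ⟨smooth_of_DD b L L' hL h U hU hh1 hD, hD⟩
  refine identity_open b L L' hL U hU hUc h hh a ha ?_
  obtain ⟨c, hc0, hc1, hc⟩ := vanish_line b L L' hL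
  obtain ⟨R₀, hR₀, hsub⟩ := Metric.isOpen_iff.1 hU a ha
  set R := R₀ / 4 with hR
  have hRpos : 0 < R := by positivity
  have hcc : Continuous fun z => b.coord i z := (contDiff_coord b i).continuous
  have hc1 : Continuous fun z => z - b.coord i z • b i :=
    continuous_id.sub (hcc.smul continuous_const)
  have hc2 : Continuous fun z => ‖b.coord i z • b i‖ := (hcc.smul continuous_const).norm
  have he1 : ∀ᶠ z in 𝓝 a, z - b.coord i z • b i ∈ ball a R := by
    have := hc1.tendsto a
    rw [hai, zero_smul, sub_zero] at this
    exact this (ball_mem_nhds a hRpos)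
  have he2 : ∀ᶠ z in 𝓝 a, ‖b.coord i z • b i‖ < c * R := by
    have := hc2.tendsto a
    rw [hai, zero_smul, norm_zero] at this
    exact this (Iio_mem_nhds (by positivity))
  filter_upwards [he1, he2] with z hz1 hz2
  set z₀ := z - b.coord i z • b i with hz₀
  set s := ‖b.coord i z • b i‖ with hs
  have hz₀i : b.coord i z₀ = 0 := by
    rw [hz₀, map_sub, map_smul]; simp
  have hze : z₀ + s • ((s⁻¹ * b.coord i z) • b i) = z := by
    rw [mul_smul]
    by_cases h0 : b.coord i z • b i = 0
    · rw [h0, smul_zero, smul_zero, hz₀, h0]; simp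
    · rw [smul_inv_smul₀ (norm_ne_zero_iff.2 h0), hz₀]; abel
  have hcb : closedBall z₀ (2 * R) ⊆ U := by
    refine Set.Subset.trans ?_ hsub
    intro y hy
    rw [mem_closedBall] at hy
    rw [mem_ball] at *
    linarith [dist_triangle y z₀ a]
  rw [← hze]
  refine hc h U z₀ _ R s hU hRpos hh hcb ?_ ?_ (norm_nonneg _) hz2.le
  · rw [mul_smul, norm_smul, norm_inv, norm_norm]; exact inv_mul_le_one
  · intro k
    exact normal_dk_zero b L L' hL U hU i _ k h hh h0 z₀
      (hcb (mem_closedBall_self (by linarith))) hz₀i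

end Gen

section App

/-- Multiplication as a bilinear map. -/
def mulB {B : Type*} [NormedAddCommGroup B] [NormedSpace ℝ B] [Mul B] [One B]
    {conj : B → B} (H : IsAltStarAlg B conj) : B →ₗ[ℝ] B →ₗ[ℝ] B :=
  LinearMap.mk₂ ℝ (fun a b => a * b) H.add_mul' H.smul_mul' H.mul_add' H.mul_smul'

theorem mulB_apply {B : Type*} [NormedAddCommGroup B] [NormedSpace ℝ B] [Mul B] [One B]
    {conj : B → B} (H : IsAltStarAlg B conj) (a b : B) : mulB H a b = a * b := rfl

/-- Left multiplication. -/
noncomputable def mulL {B : Type*} [NormedAddCommGroup B] [NormedSpace ℝ B] [Mul B] [One B]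
    {conj : B → B} (H : IsAltStarAlg B conj) (a : B) : B →L[ℝ] B :=
  have := H.finDim
  LinearMap.toContinuousLinearMap (mulB H a)

theorem mulL_apply {B : Type*} [NormedAddCommGroup B] [NormedSpace ℝ B] [Mul B] [One B]
    {conj : B → B} (H : IsAltStarAlg B conj) (a b : B) : mulL H a b = a * b := rfl

theorem amul_neg {B : Type*} [NormedAddCommGroup B] [NormedSpace ℝ B] [Mul B] [One B]
    {conj : B → B} (H : IsAltStarAlg B conj) (a b : B) : a * (-b) = -(a * b) :=
  (mulL H a).map_neg b

theorem aneg_mul {B : Type*} [NormedAddCommGroup B] [NormedSpace ℝ B] [Mul B] [One B]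
    {conj : B → B} (H : IsAltStarAlg B conj) (a b : B) : (-a) * b = -(a * b) := by
  simp only [← mulB_apply H, map_neg, LinearMap.neg_apply]

theorem sq_act {B : Type*} [NormedAddCommGroup B] [NormedSpace ℝ B] [Mul B] [One B]
    {conj : B → B} (H : IsAltStarAlg B conj) (a x : B) (ha : a * a = -1) : a * (a * x) = -x := by
  rw [H.alt_left, ha, aneg_mul H, H.one_mul']

theorem anti_act {B : Type*} [NormedAddCommGroup B] [NormedSpace ℝ B] [Mul B] [One B]
    {conj : B → B} (H : IsAltStarAlg B conj) (a b x : B) (hab : a * b = -(b * a)) :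
    a * (b * x) = -(b * (a * x)) := by
  have h := H.alt_left (a + b) x
  simp only [H.add_mul', H.mul_add'] at h
  rw [hab, ← H.alt_left, ← H.alt_left, aneg_mul H] at h
  have h2 : a * (b * x) + b * (a * x) = 0 := by
    have h3 : a * (b * x) + b * (a * x) =
      (a * (a * x) + a * (b * x) + (b * (a * x) + b * (b * x))) - a * (a * x) - b * (b * x) := by
      abel
    rw [h3, h]; abel
  exact eq_neg_of_add_eq_zero_left h2

theorem v_sq {B : Type*} [NormedAddCommGroup B] [NormedSpace ℝ B] [Mul B] [One B]
    {conj : B → B} (H : IsAltStarAlg B conj) {v : ℕ → B} {m : ℕ} (hv : IsHypBasis B conj v m)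
    (s : ℕ) (h1 : 1 ≤ s) (h2 : s ≤ m) : v s * v s = -1 := by
  have h := hv.norm_one s h1 h2
  rw [eq_neg_of_add_eq_zero_right (hv.trace_zero s h1 h2), amul_neg H] at h
  rw [← h, neg_neg]

theorem v_emb_anti {B : Type*} [NormedAddCommGroup B] [NormedSpace ℝ B] [Mul B] [One B]
    {conj : B → B} (H : IsAltStarAlg B conj) {v : ℕ → B} {m p : ℕ} (hv : IsHypBasis B conj v m)
    (hp : p < m) (w : Fin (m + 1) → ℝ) (hw : w ∈ Sph v m p)
    (s : ℕ) (h1 : 1 ≤ s) (h2 : s ≤ p) : v s * emb v m w = -(emb v m w * v s) := by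
  unfold emb
  simp only [← mulB_apply H, map_sum, map_smul, LinearMap.sum_apply, LinearMap.smul_apply]
  rw [← Finset.sum_neg_distrib]
  refine Finset.sum_congr rfl fun t _ => ?_
  by_cases ht : (t : ℕ) ≤ p
  · rw [hw.1 t ht]; simp
  · simp only [mulB_apply]
    rw [hv.anticomm s t h1 (by omega) (by omega) (by omega) (by omega), smul_neg]

theorem one_ne_zero_alg {B : Type*} [NormedAddCommGroup B] [NormedSpace ℝ B] [Mul B] [One B]
    {conj : B → B} (H : IsAltStarAlg B conj) : (1 : B) ≠ 0 := by
  intro h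
  have h0 : ∀ a : B, a = 0 := by
    intro a
    rw [← H.one_mul' a, h, ← mulB_apply H, map_zero, LinearMap.zero_apply]
  have : Subsingleton B := ⟨fun a b => by rw [h0 a, h0 b]⟩
  have := H.one_lt_finrank
  rw [Module.finrank_zero_of_subsingleton] at this
  omega

theorem sph_sum_sq {B : Type*} [NormedAddCommGroup B] [NormedSpace ℝ B] [Mul B] [One B]
    {conj : B → B} (H : IsAltStarAlg B conj) {v : ℕ → B} {m p : ℕ} (hv : IsHypBasis B conj v m)
    (w : Fin (m + 1) → ℝ) (hw : w ∈ Sph v m p) : ∑ s, (w s) ^ 2 = 1 := by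
  have h := hw.2
  unfold emb at h
  simp only [← mulB_apply H, map_sum, map_smul, LinearMap.sum_apply, LinearMap.smul_apply] at h
  simp only [mulB_apply, Finset.smul_sum] at h
  have h' := h
  rw [Finset.sum_comm] at h'
  have h2 : ∑ s : Fin (m + 1), ∑ t : Fin (m + 1), (w s • w t • (v t * v s) + w t • w s • (v s * v t))
      = -1 + -1 := by
    simp only [Finset.sum_add_distrib]
    first
      | rw [h, h']
      | rw [h', h]
  have h3 : ∀ s t : Fin (m + 1), w s • w t • (v t * v s) + w t • w s • (v s * v t) =
      if s = t then (-(2 * (w s) ^ 2)) • (1 : B) else 0 := by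
    intro s t
    by_cases hs : (s : ℕ) ≤ p
    · rw [hw.1 s hs]; simp
    by_cases ht : (t : ℕ) ≤ p
    · rw [hw.1 t ht, if_neg (by rintro rfl; exact hs ht)]; simp
    by_cases hst : s = t
    · subst hst
      rw [if_pos rfl, v_sq H hv s (by omega) (by omega)]
      module
    · rw [if_neg hst, hv.anticomm t s (by omega) (by omega) (by omega) (by omega)
        (fun hh => hst (Fin.ext hh.symm))]
      module
  simp only [h3, Finset.sum_ite_eq, Finset.mem_univ, if_true] at h2
  rw [← Finset.sum_smul, Finset.sum_neg_distrib, ← Finset.mul_sum] at h2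
  have h4 : (∑ s, (w s) ^ 2 - 1) • (1 : B) = 0 := by
    have : (-(2 * ∑ s, (w s) ^ 2) + 2) • (1 : B) = 0 := by
      rw [add_smul, h2]; module
    have h5 : (∑ s, (w s) ^ 2 - 1) = (-1 / 2) * (-(2 * ∑ s, (w s) ^ 2) + 2) := by ring
    rw [h5, mul_smul, this, smul_zero]
  have := (smul_eq_zero.1 h4).resolve_right (one_ne_zero_alg H)
  linarith

theorem emb_neg {B : Type*} [NormedAddCommGroup B] [NormedSpace ℝ B] 
    (v : ℕ → B) (m : ℕ) (w : Fin (m + 1) → ℝ) : emb v m (-w) = -emb v m w := by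
  unfold emb
  simp

theorem sph_neg {B : Type*} [NormedAddCommGroup B] [NormedSpace ℝ B] [Mul B] [One B]
    {conj : B → B} (H : IsAltStarAlg B conj) {v : ℕ → B} {m p : ℕ}
    (w : Fin (m + 1) → ℝ) (hw : w ∈ Sph v m p) : -w ∈ Sph v m p := by
  refine ⟨fun s hs => by simp [hw.1 s hs], ?_⟩
  rw [emb_neg, aneg_mul H, amul_neg H, neg_neg, hw.2]

theorem pt_neg (m p : ℕ) (w : Fin (m + 1) → ℝ) (y : Fin (p + 1) → ℝ) (r : ℝ) :
    pt m p (-w) y r = pt m p w y (-r) := by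
  unfold pt; simp

theorem pt_mem_of_mem {B : Type*} [NormedAddCommGroup B] [NormedSpace ℝ B] [Mul B] [One B]
    {conj : B → B} (H : IsAltStarAlg B conj) {v : ℕ → B} {m p : ℕ} (hv : IsHypBasis B conj v m)
    (Ω : Set (Fin (m + 1) → ℝ)) (hsym : PSym v m p Ω)
    (w : Fin (m + 1) → ℝ) (hw : w ∈ Sph v m p) (w' : Fin (m + 1) → ℝ) (hw' : w' ∈ Sph v m p)
    (y : Fin (p + 1) → ℝ) (r : ℝ) (hx : pt m p w y r ∈ Ω) : pt m p w' y r ∈ Ω := by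
  have hxp : xppart m p (pt m p w y r) = injP m p y := by
    ext s
    simp only [xppart, pt, injP, Pi.add_apply, Pi.smul_apply, smul_eq_mul]
    by_cases hs : (s : ℕ) ≤ p
    · rw [if_pos hs, hw.1 s hs]; simp
    · rw [if_neg hs, dif_neg (by omega)]
  have hxq : xqpart m p (pt m p w y r) = r • w := by
    ext s
    simp only [xqpart, pt, injP, Pi.add_apply, Pi.smul_apply, smul_eq_mul]
    by_cases hs : (s : ℕ) ≤ p
    · rw [if_pos hs, hw.1 s hs]; simp
    · rw [if_neg hs, dif_neg (by omega), zero_add]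
  have hr : rad m p (pt m p w y r) = |r| := by
    unfold rad
    rw [hxq]
    simp only [Pi.smul_apply, smul_eq_mul, mul_pow]
    rw [← Finset.mul_sum, sph_sum_sq H hv w hw, mul_one, Real.sqrt_sq_eq_abs]
  rcases abs_choice r with h | h
  · have := hsym _ hx w' hw'
    rw [hxp, hr, h] at this
    exact this
  · have := hsym _ hx _ (sph_neg H w' hw')
    rw [hxp, hr, h] at this
    simpa [pt] using this

/-- The standard basis of `ℝ^{p+2}`. -/
noncomputable def stdB (p : ℕ) : Module.Basis (Fin (p + 1) ⊕ Unit) ℝ ((Fin (p + 1) → ℝ) × ℝ) :=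
  (Pi.basisFun ℝ (Fin (p + 1))).prod (Module.Basis.singleton Unit ℝ)

theorem stdB_inl (p : ℕ) (s : Fin (p + 1)) : stdB p (Sum.inl s) = (Pi.single s 1, 0) := by
  simp [stdB, Module.Basis.prod_apply]

theorem stdB_inr (p : ℕ) : stdB p (Sum.inr ()) = (0, 1) := by
  simp [stdB, Module.Basis.prod_apply]

theorem stdB_coord (p : ℕ) (z : (Fin (p + 1) → ℝ) × ℝ) :
    (stdB p).coord (Sum.inr ()) z = z.2 := by
  simp [stdB]

/-- The coefficients of the slice operator. -/
noncomputable def cL {B : Type*} [NormedAddCommGroup B] [NormedSpace ℝ B] [Mul B] [One B]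
    {conj : B → B} (H : IsAltStarAlg B conj) (v : ℕ → B) (m p : ℕ) (w : Fin (m + 1) → ℝ) :
    Fin (p + 1) ⊕ Unit → B →L[ℝ] B :=
  Sum.elim (fun s => mulL H (v s)) (fun _ => mulL H (emb v m w))

/-- The conjugate coefficients. -/
noncomputable def cL' {B : Type*} [NormedAddCommGroup B] [NormedSpace ℝ B] [Mul B] [One B]
    {conj : B → B} (H : IsAltStarAlg B conj) (v : ℕ → B) (m p : ℕ) (w : Fin (m + 1) → ℝ) :
    Fin (p + 1) ⊕ Unit → B →L[ℝ] B :=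
  Sum.elim (fun s => if (s : ℕ) = 0 then mulL H (v s) else -mulL H (v s))
    (fun _ => -mulL H (emb v m w))

theorem cL_cl {B : Type*} [NormedAddCommGroup B] [NormedSpace ℝ B] [Mul B] [One B]
    {conj : B → B} (H : IsAltStarAlg B conj) {v : ℕ → B} {m p : ℕ} (hv : IsHypBasis B conj v m)
    (hp : p < m) (w : Fin (m + 1) → ℝ) (hw : w ∈ Sph v m p) :
    IsCl (cL H v m p w) (cL' H v m p w) := by
  have h1 : ∀ x : B, v 0 * x = x := fun x => by rw [hv.v_zero, H.one_mul']
  rintro (j | j) (k | k) x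
  · simp only [cL, cL', Sum.elim_inl, Sum.inl.injEq]
    by_cases hj : (j : ℕ) = 0
    · by_cases hk : (k : ℕ) = 0
      · have hjk : j = k := Fin.ext (by omega)
        subst hjk
        simp only [hj, if_true, mulL_apply, h1, two_smul]
      · have hjk : j ≠ k := by rintro rfl; exact hk hj
        simp only [hj, hk, hjk, if_true, if_false, mulL_apply, h1, neg_apply]
        abel
    · by_cases hk : (k : ℕ) = 0
      · have hjk : j ≠ k := by rintro rfl; exact hj hk
        simp only [hj, hk, hjk, if_true, if_false, mulL_apply, h1, neg_apply]
        abel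
      · simp only [hj, hk, if_false, mulL_apply, neg_apply]
        by_cases hjk : j = k
        · subst hjk
          rw [if_pos rfl, sq_act H _ _ (v_sq H hv j (by omega) (by omega)), two_smul, neg_neg]
        · rw [if_neg hjk, anti_act H _ _ x (hv.anticomm k j (by omega) (by omega) (by omega)
            (by omega) (fun hh => hjk (Fin.ext hh.symm)))]
          abel
  · simp only [cL, cL', Sum.elim_inl, Sum.elim_inr, reduceCtorEq, if_false]
    by_cases hj : (j : ℕ) = 0
    · simp only [hj, if_true, mulL_apply, h1, neg_apply]
      abel
    · simp only [hj, if_false, mulL_apply, neg_apply]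
      rw [anti_act H _ _ x (v_emb_anti H hv hp w hw j (by omega) (by omega))]
      abel
  · simp only [cL, cL', Sum.elim_inl, Sum.elim_inr, reduceCtorEq, if_false]
    by_cases hk : (k : ℕ) = 0
    · simp only [hk, if_true, mulL_apply, h1, neg_apply]
      abel
    · simp only [hk, if_false, mulL_apply, neg_apply]
      rw [anti_act H _ _ x (v_emb_anti H hv hp w hw k (by omega) (by omega))]
      abel
  · simp only [cL, cL', Sum.elim_inr, if_true, mulL_apply, neg_apply]
    rw [sq_act H _ _ hw.2, neg_neg, two_smul]

theorem DD_eq {B : Type*} [NormedAddCommGroup B] [NormedSpace ℝ B] [Mul B] [One B]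
    {conj : B → B} (H : IsAltStarAlg B conj) (v : ℕ → B) (m p : ℕ) (w : Fin (m + 1) → ℝ)
    (G : (Fin (p + 1) → ℝ) × ℝ → B) (z : (Fin (p + 1) → ℝ) × ℝ) :
    DD (stdB p) (cL H v m p w) G z = DomCR v m p w G z := by
  unfold DD DomCR DopSx pdSx pdSr
  rw [Fintype.sum_sum_type]
  simp only [cL, Sum.elim_inl, Sum.elim_inr, stdB_inl, stdB_inr, mulL_apply,
    Finset.univ_unique, Finset.sum_singleton]
  rw [show (default : Unit) = () from rfl, stdB_inr]

theorem sliceSet_open {m p : ℕ} {Ω : Set (Fin (m + 1) → ℝ)} (hΩ : IsOpen Ω)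
    (w : Fin (m + 1) → ℝ) : IsOpen (sliceSet m p Ω w) := by
  have : Continuous fun z : (Fin (p + 1) → ℝ) × ℝ => pt m p w z.1 z.2 := by
    unfold pt
    refine Continuous.add ?_ (by fun_prop)
    refine continuous_pi fun s => ?_
    unfold injP
    by_cases hs : (s : ℕ) < p + 1
    · simp only [hs, dif_pos]; fun_prop
    · simp only [hs, dif_neg, not_false_iff]; fun_prop
  exact hΩ.preimage this

theorem slice_identity {B : Type*} [NormedAddCommGroup B] [NormedSpace ℝ B] [Mul B] [One B]
    {conj : B → B} (H : IsAltStarAlg B conj) {v : ℕ → B} {m p : ℕ} (hv : IsHypBasis B conj v m)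
    (hp : p < m) (Ω : Set (Fin (m + 1) → ℝ)) (hΩ : SliceDomain v m p Ω)
    (w : Fin (m + 1) → ℝ) (hw : w ∈ Sph v m p)
    (h : (Fin (p + 1) → ℝ) × ℝ → B) (hc : ContDiffOn ℝ 1 h (sliceSet m p Ω w))
    (hD : ∀ z ∈ sliceSet m p Ω w, DomCR v m p w h z = 0)
    (h0 : ∀ z ∈ sliceSet m p Ω w, z.2 = 0 → h z = 0) :
    ∀ z ∈ sliceSet m p Ω w, h z = 0 := by
  have := H.finDim
  have : CompleteSpace B := FiniteDimensional.complete ℝ B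
  obtain ⟨hO, -, ⟨x, hx, hxq⟩, hcon⟩ := hΩ
  refine identity_hyperplane (stdB p) (cL H v m p w) (cL' H v m p w) (cL_cl H hv hp w hw)
    _ (sliceSet_open hO w) (hcon w hw).isPreconnected (Sum.inr ()) h hc
    (fun z hz => by rw [DD_eq]; exact hD z hz) (projP m p x, 0) ?_ ?_ ?_
  · show pt m p w (projP m p x) 0 ∈ Ω
    have : pt m p w (projP m p x) 0 = x := by
      ext s
      simp only [pt, zero_smul, add_zero, injP, projP]
      by_cases hs : (s : ℕ) < p + 1
      · rw [dif_pos hs, dif_pos s.2]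
      · rw [dif_neg hs]
        have := congrFun hxq s
        simp only [xqpart] at this
        rw [if_neg (by omega)] at this
        exact this.symm
    rwa [this]
  · rw [stdB_coord]
  · intro z hz hz2
    rw [stdB_coord] at hz2
    exact h0 z hz hz2

theorem formula_aux {B : Type*} [NormedAddCommGroup B] [NormedSpace ℝ B] [Mul B] [One B]
    {conj : B → B} (H : IsAltStarAlg B conj) {v : ℕ → B} {m p : ℕ} (hv : IsHypBasis B conj v m)
    (hp : p < m) (Ω : Set (Fin (m + 1) → ℝ)) (hsym : PSym v m p Ω) (hΩ : SliceDomain v m p Ω)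
    (f : (Fin (m + 1) → ℝ) → B) (hf : GSM v m p f Ω)
    (w : Fin (m + 1) → ℝ) (hw : w ∈ Sph v m p)
    (η : Fin (m + 1) → ℝ) (hη : η ∈ Sph v m p)
    (y : Fin (p + 1) → ℝ) (r : ℝ) (hx : pt m p w y r ∈ Ω) :
    f (pt m p w y r) =
        (2 : ℝ)⁻¹ • (f (pt m p η y r) + f (pt m p η y (-r))) +
        (2 : ℝ)⁻¹ •
          (emb v m w * (emb v m η * (f (pt m p η y (-r)) - f (pt m p η y r)))) := by
  set D := sliceSet m p Ω w with hDdef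
  have hDo : IsOpen D := sliceSet_open hΩ.1 w
  have hDη : ∀ z ∈ D, z ∈ sliceSet m p Ω η := fun z hz =>
    pt_mem_of_mem H hv Ω hsym w hw η hη z.1 z.2 hz
  have hDr : ∀ z ∈ D, reflD p z ∈ sliceSet m p Ω η := by
    intro z hz
    have := pt_mem_of_mem H hv Ω hsym w hw (-η) (sph_neg H η hη) z.1 z.2 hz
    rw [pt_neg] at this
    exact this
  set W := mulL H (emb v m w) with hW
  set N := mulL H (emb v m η) with hN
  set T1 : B →L[ℝ] B := (2 : ℝ)⁻¹ • (ContinuousLinearMap.id ℝ B - W.comp N) with hT1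
  set T2 : B →L[ℝ] B := (2 : ℝ)⁻¹ • (ContinuousLinearMap.id ℝ B + W.comp N) with hT2
  set F := sliceFun m p f η with hF
  have hT1a : ∀ x, T1 x = (2 : ℝ)⁻¹ • (x - emb v m w * (emb v m η * x)) := fun x => rfl
  have hT2a : ∀ x, T2 x = (2 : ℝ)⁻¹ • (x + emb v m w * (emb v m η * x)) := fun x => rfl
  let ref : ((Fin (p + 1) → ℝ) × ℝ) →L[ℝ] ((Fin (p + 1) → ℝ) × ℝ) :=
    (ContinuousLinearMap.fst ℝ _ _).prod (-(ContinuousLinearMap.snd ℝ _ _))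
  have href : ∀ z, ref z = reflD p z := fun z => rfl
  set g : (Fin (p + 1) → ℝ) × ℝ → B := fun z => T1 (F z) + T2 (F (ref z)) with hg
  have hFo := sliceSet_open (p := p) hΩ.1 η
  have hFc := (hf η hη).1
  have hWc := (hf w hw).1
  have hgc : ContDiffOn ℝ 1 g D := by
    refine ContDiffOn.add ?_ ?_
    · exact T1.contDiff.comp_contDiffOn (hFc.mono hDη)
    · exact T2.contDiff.comp_contDiffOn (hFc.comp ref.contDiff.contDiffOn hDr)
  have hdF : ∀ z ∈ sliceSet m p Ω η, DifferentiableAt ℝ F z := fun z hz =>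
    (hFc.contDiffAt (hFo.mem_nhds hz)).differentiableAt (by simp)
  have hcomm : ∀ (s : Fin (p + 1)) x,
      v s * (emb v m w * (emb v m η * x)) = emb v m w * (emb v m η * (v s * x)) := by
    intro s x
    by_cases hs : (s : ℕ) = 0
    · rw [hs, hv.v_zero, H.one_mul', H.one_mul']
    · rw [anti_act H _ _ _ (v_emb_anti H hv hp w hw s (by omega) (by omega)),
        anti_act H _ _ _ (v_emb_anti H hv hp η hη s (by omega) (by omega)), amul_neg H, neg_neg]
  have hc1 : ∀ (s : Fin (p + 1)) x, v s * T1 x = T1 (v s * x) := by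
    intro s x
    rw [hT1a, hT1a, H.mul_smul', sub_eq_add_neg, H.mul_add', amul_neg H, hcomm, ← sub_eq_add_neg]
  have hc2 : ∀ (s : Fin (p + 1)) x, v s * T2 x = T2 (v s * x) := by
    intro s x
    rw [hT2a, hT2a, H.mul_smul', H.mul_add', hcomm]
  have hfg : ∀ z ∈ D, HasFDerivAt g
      (T1.comp (fderiv ℝ F z) + T2.comp ((fderiv ℝ F (ref z)).comp ref)) z := by
    intro z hz
    refine HasFDerivAt.add ?_ ?_
    · exact T1.hasFDerivAt.comp z (hdF z (hDη z hz)).hasFDerivAt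
    · exact T2.hasFDerivAt.comp z ((hdF _ (hDr z hz)).hasFDerivAt.comp z ref.hasFDerivAt)
  have hgD : ∀ z ∈ D, DomCR v m p w g z = 0 := by
    intro z hz
    have e1 := (hf η hη).2 z (hDη z hz)
    have e2 := (hf η hη).2 _ (hDr z hz)
    unfold DomCR DopSx pdSx pdSr at *
    rw [(hfg z hz).fderiv]
    have hr1 : ∀ s : Fin (p + 1), ref (Pi.single s 1, 0) = (Pi.single s 1, 0) := by
      intro s; rw [href]; simp [reflD]
    have hr2 : ref (0, 1) = -(0, 1) := by
      rw [href]; simp [reflD]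
    simp only [add_apply, ContinuousLinearMap.comp_apply, hr1, hr2, map_neg,
      H.mul_add', hc1, hc2, Finset.sum_add_distrib, amul_neg H]
    rw [← map_sum, ← map_sum]
    rw [← hF] at e1 e2
    rw [href, eq_neg_of_add_eq_zero_left e1, eq_neg_of_add_eq_zero_left e2]
    generalize fderiv ℝ F z (0, 1) = d
    generalize fderiv ℝ F (reflD p z) (0, 1) = d'
    simp only [hT1a, hT2a, H.mul_smul', sub_eq_add_neg, H.mul_add', amul_neg H,
      sq_act H _ _ hη.2, sq_act H _ _ hw.2]
    module
  have key := slice_identity H hv hp Ω hΩ w hw (fun z => sliceFun m p f w z - g z)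
    (hWc.sub hgc) ?_ ?_ (y, r) hx
  · have h1 := sub_eq_zero.1 key
    have h2 : f (pt m p w y r) = g (y, r) := h1
    rw [h2]
    have h3 : g (y, r) = T1 (f (pt m p η y r)) + T2 (f (pt m p η y (-r))) := rfl
    rw [h3, hT1a, hT2a]
    generalize f (pt m p η y r) = a
    generalize f (pt m p η y (-r)) = a'
    simp only [sub_eq_add_neg, H.mul_add', amul_neg H]
    module
  · intro z hz
    have hdw : DifferentiableAt ℝ (sliceFun m p f w) z :=
      (hWc.contDiffAt (hDo.mem_nhds hz)).differentiableAt (by simp)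
    have e1 := (hf w hw).2 z hz
    have e2 := hgD z hz
    unfold DomCR DopSx pdSx pdSr at *
    rw [fderiv_fun_sub hdw (hfg z hz).differentiableAt]
    simp only [sub_apply]
    simp only [sub_eq_add_neg, H.mul_add', amul_neg H, Finset.sum_add_distrib,
      Finset.sum_neg_distrib]
    rw [eq_neg_of_add_eq_zero_left e1, eq_neg_of_add_eq_zero_left e2]
    abel
  · intro z hz hz2
    have h1 : ref z = z := by
      rw [href]; ext <;> simp [reflD, hz2]
    have h2 : sliceFun m p f w z = F z := by
      simp only [hF, sliceFun, pt, hz2, zero_smul]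
    show sliceFun m p f w z - g z = 0
    simp only [hg, h1, h2, hT1a, hT2a]
    module

end App

/-- **Representation Formula.** For a left generalized partial-slice monogenic
function on a p-symmetric slice domain,
`f(x_p + rω) = ½(f(x_p + rη) + f(x_p - rη)) + ½ ω (η (f(x_p - rη) - f(x_p + rη)))`
for all `ω, η ∈ 𝕊`; moreover the two bracketed functions do not depend on `η`. -/
theorem representation_formula
    {A : Type*} [NormedAddCommGroup A] [NormedSpace ℝ A] [Mul A] [One A]
    (conj : A → A) (H : IsAltStarAlg A conj)
    (v : ℕ → A) (m p : ℕ) (hv : IsHypBasis A conj v m) (hp : p < m)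
    (Ω : Set (Fin (m + 1) → ℝ)) (hsym : PSym v m p Ω) (hΩ : SliceDomain v m p Ω)
    (f : (Fin (m + 1) → ℝ) → A) (hf : GSM v m p f Ω)
    (w : Fin (m + 1) → ℝ) (hw : w ∈ Sph v m p)
    (η : Fin (m + 1) → ℝ) (hη : η ∈ Sph v m p)
    (y : Fin (p + 1) → ℝ) (r : ℝ) (hx : pt m p w y r ∈ Ω) :
    f (pt m p w y r) =
        (2 : ℝ)⁻¹ • (f (pt m p η y r) + f (pt m p η y (-r))) +
        (2 : ℝ)⁻¹ •
          (emb v m w * (emb v m η * (f (pt m p η y (-r)) - f (pt m p η y r)))) ∧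
    (∀ η' ∈ Sph v m p,
      (2 : ℝ)⁻¹ • (f (pt m p η y r) + f (pt m p η y (-r))) =
        (2 : ℝ)⁻¹ • (f (pt m p η' y r) + f (pt m p η' y (-r))) ∧
      (2 : ℝ)⁻¹ • (emb v m η * (f (pt m p η y (-r)) - f (pt m p η y r))) =
        (2 : ℝ)⁻¹ • (emb v m η' * (f (pt m p η' y (-r)) - f (pt m p η' y r)))) := by
  refine ⟨formula_aux H hv hp Ω hsym hΩ f hf w hw η hη y r hx, ?_⟩
  intro η' hη'
  have hn := sph_neg H η' hη'
  have e1 := formula_aux H hv hp Ω hsym hΩ f hf η' hη' η hη y r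
    (pt_mem_of_mem H hv Ω hsym w hw η' hη' y r hx)
  have e2 := formula_aux H hv hp Ω hsym hΩ f hf (-η') hn η hη y r
    (pt_mem_of_mem H hv Ω hsym w hw (-η') hn y r hx)
  rw [pt_neg, emb_neg, aneg_mul H] at e2
  rw [e1, e2]
  generalize f (pt m p η y r) = a
  generalize f (pt m p η y (-r)) = a'
  generalize emb v m η * (a' - a) = c
  constructor
  · module
  · simp only [sub_eq_add_neg, H.mul_add', amul_neg H, H.mul_smul', sq_act H _ _ hη'.2, smul_neg]
    module

end GPSM
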